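/- arXiv:1404.1056 — 2 statements merged into one kernel-verified Lean document; each statement's English description precedes it below -/
import Mathlib

section
/- For every integer k ≥ 2 and every input list L, First Fit with cardinality constraint k satisfies FF(L) ≤ (2.7 − 2.4/k)·OPT(L). That is, the absolute competitive ratio of First Fit is at most 2.7 − 2.4/k. -/
/-!
An item fails to fit, by size alone and with respect to the final loads, in each earlier bin that
holds fewer than `k` items. So the `N` bins with fewer than `k` items form a First Fit packing
without cardinality constraint of the `n` items in them. With `Z` the optimal number of bins and `K`
the number of full bins, `k * K + n ≤ k * Z`. The constraint plays no further role, and the claim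
for `K + N` bins becomes arithmetic once `10 * N ≤ 17 * Z`, or `10 * N = 17 * Z + 1` and
`8 * Z ≤ 3 * n`. (At most `Z` bins have a *single* item, because two single items do not fit
together; the other bins are called *common*, and `2 * N ≤ n + Z`.)

The number `17 / 10` comes from weights. An item of size `a` has weight `6 * a` plus a bonus, which
is `2 - 3 * y` for a single item and otherwise depends on `a`. Here `0 ≤ y ≤ 1 / 6` is chosen from
the load of the last common bin, and `y = 0` is the usual choice in the analysis of First Fit. An
optimal bin has weight at most `8.5 - 6 * y`, up to a correction for one exceptionally small single
item. A First Fit bin has weight at least `5 - 3 * y` on average, since the bonus of a common bin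
pays for the load missing in the preceding one, up to a deficit of the last common bin. If there are
too few single items for this, comparing total sizes is enough.

After rounding only `10 * N = 17 * Z + 1` remains, and then the unused bonus of the first common bin
shows that some bin has four items, hence `2 * N + 2 ≤ n + Z`. This is enough for `Z = 7`, the first
case that occurs. For the others, `Z ≥ 17`, one counts the quarters of a bin exceeded by each item:
they show `4 * N ≤ n + 4 * Z + 2`, because items larger than a quarter are scarce in the optimal
bins, while a common bin without them has at least four items, with one exception.
-/

open scoped Classical
noncomputable section

/-- An input is a list of item sizes, each in (0,1]. -/
def ValidInput (L : List ℝ) : Prop := ∀ x ∈ L, 0 < x ∧ x ≤ 1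

/-- A packing assigns a bin index to each item; it is feasible for cardinality
constraint `k` if every bin receives at most `k` items of total size at most 1. -/
def IsFeasible (k : ℕ) (L : List ℝ) (f : Fin L.length → ℕ) : Prop :=
  ∀ b : ℕ,
    (Finset.univ.filter (fun i => f i = b)).card ≤ k ∧
    ∑ i ∈ Finset.univ.filter (fun i => f i = b), L.get i ≤ 1

/-- The number of bins used by a packing. -/
def binsUsed (L : List ℝ) (f : Fin L.length → ℕ) : ℕ :=
  (Finset.univ.image f).card

/-- The optimal (minimum) number of bins in a feasible packing of `L`. -/
def OPT (k : ℕ) (L : List ℝ) : ℕ :=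
  sInf {n | ∃ f : Fin L.length → ℕ, IsFeasible k L f ∧ binsUsed L f = n}

/-- A deterministic online algorithm is a strategy: given the items seen so far
(ending with the item to be packed), it returns the bin index for that item. -/
def onlinePacking (A : List ℝ → ℕ) (L : List ℝ) : Fin L.length → ℕ :=
  fun i => A (L.take (i.1 + 1))

/-- The strategy `A` is a valid online algorithm for cardinality constraint `k`
if on every valid input the induced packing is feasible. -/
def OnlineValid (k : ℕ) (A : List ℝ → ℕ) : Prop :=
  ∀ L : List ℝ, ValidInput L → IsFeasible k L (onlinePacking A L)

/-- The number of bins used by online algorithm `A` on input `L`. -/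
def onlineBins (A : List ℝ → ℕ) (L : List ℝ) : ℕ :=
  binsUsed L (onlinePacking A L)

/-- The state of First Fit: a list of open bins (in order of opening),
each recorded as (number of items, total size). `ffFind` returns the index of
the first bin that can receive an item of size `x` (it has at most `k-1` items
and the item fits); if none, the index of a new bin. -/
def ffFind (k : ℕ) (x : ℝ) : List (ℕ × ℝ) → ℕ
  | [] => 0
  | b :: bs => if b.1 < k ∧ b.2 + x ≤ 1 then 0 else ffFind k x bs + 1

/-- Update the First Fit state after packing an item of size `x`. -/
def ffUpdate (k : ℕ) (x : ℝ) : List (ℕ × ℝ) → List (ℕ × ℝ)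
  | [] => [(1, x)]
  | b :: bs =>
      if b.1 < k ∧ b.2 + x ≤ 1 then (b.1 + 1, b.2 + x) :: bs
      else b :: ffUpdate k x bs

/-- The final state of First Fit with cardinality constraint `k` on input `L`. -/
def ffState (k : ℕ) (L : List ℝ) : List (ℕ × ℝ) :=
  L.foldl (fun bs x => ffUpdate k x bs) []

/-- The number of bins used by First Fit with cardinality constraint `k` on `L`. -/
def FF (k : ℕ) (L : List ℝ) : ℕ := (ffState k L).length

/-- The bin index into which First Fit packs the `i`-th item of `L`. -/
def ffAssign (k : ℕ) (L : List ℝ) (i : Fin L.length) : ℕ :=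
  ffFind k (L.get i) (ffState k (L.take i.1))

namespace BinPacking

variable {ι κ τ : Type*} {I J : Finset ι} {s : ι → ℝ} {p : ι → κ} {q : ι → τ} {b : κ} {i j : ι}

/-! ### Packings -/

/-- The items of `I` that the packing `p` puts into bin `b`. -/
def content (I : Finset ι) (p : ι → κ) (b : κ) : Finset ι := {i ∈ I | p i = b}

/-- The bins that receive an item of `I` from the packing `p`. -/
def bins (I : Finset ι) (p : ι → κ) : Finset κ := I.image p

/-- The total size of the items of `I` in bin `b`. -/
def load (I : Finset ι) (s : ι → ℝ) (p : ι → κ) (b : κ) : ℝ := ∑ i ∈ content I p b, s i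

/-- The packing `q` of items with sizes `s` respects the unit capacity of the bins. -/
def IsPacking (I : Finset ι) (s : ι → ℝ) (q : ι → τ) : Prop := ∀ b, load I s q b ≤ 1

lemma mem_content : i ∈ content I p b ↔ i ∈ I ∧ p i = b := by
  simp only [content, Finset.mem_filter]

lemma mem_bins : b ∈ bins I p ↔ ∃ i ∈ I, p i = b := by
  simp only [bins, Finset.mem_image]

lemma mem_bins_of_mem (hi : i ∈ I) : p i ∈ bins I p := mem_bins.2 ⟨i, hi, rfl⟩

lemma mem_content_self (hi : i ∈ I) : i ∈ content I p (p i) := mem_content.2 ⟨hi, rfl⟩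

lemma content_subset : content I p b ⊆ I := fun _ hi => (mem_content.1 hi).1

lemma content_mono (h : J ⊆ I) : content J p b ⊆ content I p b := fun _ hi =>
  mem_content.2 ⟨h (mem_content.1 hi).1, (mem_content.1 hi).2⟩

lemma content_insert [DecidableEq ι] : content (insert i I) p b =
    if p i = b then insert i (content I p b) else content I p b := by
  rw [content, Finset.filter_insert, content]

lemma content_nonempty (hb : b ∈ bins I p) : (content I p b).Nonempty := by
  obtain ⟨i, hi, rfl⟩ := mem_bins.1 hb
  exact ⟨i, mem_content_self hi⟩

lemma bins_mono (h : J ⊆ I) : bins J p ⊆ bins I p := Finset.image_subset_image h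

lemma load_mono (hs : ∀ i ∈ I, 0 ≤ s i) (h : J ⊆ I) : load J s p b ≤ load I s p b :=
  Finset.sum_le_sum_of_subset_of_nonneg (content_mono h)
    fun i hi _ => hs i (content_subset hi)

lemma sum_content_of_subset {M : Type*} [AddCommMonoid M] (h : J ⊆ I) (w : ι → M) :
    ∑ b ∈ bins I p, ∑ i ∈ content J p b, w i = ∑ i ∈ J, w i :=
  Finset.sum_fiberwise_of_maps_to (fun _ hi => mem_bins_of_mem (h hi)) w

lemma sum_content {M : Type*} [AddCommMonoid M] (w : ι → M) :
    ∑ b ∈ bins I p, ∑ i ∈ content I p b, w i = ∑ i ∈ I, w i :=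
  sum_content_of_subset subset_rfl w

lemma sum_card_content : ∑ b ∈ bins I p, (content I p b).card = I.card := by
  simpa only [Finset.card_eq_sum_ones] using sum_content fun _ => 1

lemma sum_load : ∑ b ∈ bins I p, load I s p b = ∑ i ∈ I, s i := sum_content s

lemma IsPacking.sum_le_card_bins (hq : IsPacking I s q) : ∑ i ∈ I, s i ≤ (bins I q).card := by
  rw [← sum_load (p := q)]
  simpa using Finset.sum_le_card_nsmul _ _ 1 fun b _ => hq b

lemma IsPacking.mono (hq : IsPacking I s q) (hs : ∀ i ∈ I, 0 ≤ s i) (h : J ⊆ I) :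
    IsPacking J s q := fun b => (load_mono hs h).trans (hq b)

/-! ### Single items and common bins -/

/-- The items that are alone in their bin. -/
def singles (I : Finset ι) (p : ι → κ) : Finset ι := {i ∈ I | (content I p (p i)).card = 1}

/-- The bins with at least two items. -/
def commonBins (I : Finset ι) (p : ι → κ) : Finset κ := {b ∈ bins I p | 1 < (content I p b).card}

lemma mem_singles : i ∈ singles I p ↔ i ∈ I ∧ (content I p (p i)).card = 1 := Finset.mem_filter

lemma mem_commonBins : b ∈ commonBins I p ↔ b ∈ bins I p ∧ 1 < (content I p b).card :=
  Finset.mem_filter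

lemma singles_subset : singles I p ⊆ I := Finset.filter_subset _ _

lemma commonBins_subset : commonBins I p ⊆ bins I p := Finset.filter_subset _ _

lemma content_eq_singleton (hi : i ∈ singles I p) : content I p (p i) = {i} := by
  obtain ⟨hi, hcard⟩ := mem_singles.1 hi
  obtain ⟨j, hj⟩ := Finset.card_eq_one.1 hcard
  have hij := mem_content_self (p := p) hi
  rw [hj, Finset.mem_singleton] at hij
  rw [hj, hij]

lemma load_of_mem_singles (hi : i ∈ singles I p) : load I s p (p i) = s i := by
  rw [load, content_eq_singleton hi, Finset.sum_singleton]

lemma injOn_singles : Set.InjOn p (singles I p) := fun i hi j hj hij => by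
  have hj' := mem_content_self (p := p) (singles_subset hj)
  rwa [← hij, content_eq_singleton hi, Finset.mem_singleton, eq_comm] at hj'

lemma ne_of_mem_singles (hi : i ∈ singles I p) (hb : b ∈ commonBins I p) : p i ≠ b := by
  rintro rfl
  exact (mem_commonBins.1 hb).2.ne' (mem_singles.1 hi).2

lemma notMem_singles (hb : b ∈ commonBins I p) (hi : i ∈ content I p b) : i ∉ singles I p :=
  fun hi' => ne_of_mem_singles hi' hb (mem_content.1 hi).2

lemma mem_commonBins_of_notMem_singles (hi : i ∈ I) (h : i ∉ singles I p) :
    p i ∈ commonBins I p := by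
  have hpos := Finset.card_pos.2 ⟨i, mem_content_self (p := p) hi⟩
  have hne : (content I p (p i)).card ≠ 1 := fun hcard => h (mem_singles.2 ⟨hi, hcard⟩)
  exact mem_commonBins.2 ⟨mem_bins_of_mem hi, by omega⟩

lemma sum_singles_add_sum_commonBins {M : Type*} [AddCommMonoid M] (w : ι → M) :
    ∑ i ∈ singles I p, w i + ∑ b ∈ commonBins I p, ∑ i ∈ content I p b, w i = ∑ i ∈ I, w i := by
  have hcommon : ∑ b ∈ commonBins I p, ∑ i ∈ content I p b, w i = ∑ i ∈ I \ singles I p, w i := by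
    rw [← Finset.sum_fiberwise_of_maps_to (t := commonBins I p) (g := p) fun i hi =>
      mem_commonBins_of_notMem_singles (Finset.mem_sdiff.1 hi).1 (Finset.mem_sdiff.1 hi).2]
    refine Finset.sum_congr rfl fun b hb => Finset.sum_congr ?_ fun _ _ => rfl
    ext i
    simp only [Finset.mem_filter, Finset.mem_sdiff]
    exact ⟨fun hi => ⟨⟨content_subset hi, notMem_singles hb hi⟩, (mem_content.1 hi).2⟩,
      fun hi => mem_content.2 ⟨hi.1.1, hi.2⟩⟩
  rw [hcommon, add_comm, Finset.sum_sdiff singles_subset]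

lemma card_singles_add_card_commonBins :
    (singles I p).card + (commonBins I p).card = (bins I p).card := by
  have hsingle : (singles I p).image p = {b ∈ bins I p | ¬ 1 < (content I p b).card} := by
    ext b
    simp only [Finset.mem_image, Finset.mem_filter]
    constructor
    · rintro ⟨i, hi, rfl⟩
      exact ⟨mem_bins_of_mem (singles_subset hi), (mem_singles.1 hi).2.not_gt⟩
    · rintro ⟨hb, hcard⟩
      obtain ⟨i, hi, rfl⟩ := mem_bins.1 hb
      have hpos := Finset.card_pos.2 (content_nonempty hb)
      exact ⟨i, mem_singles.2 ⟨hi, by omega⟩, rfl⟩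
  rw [← Finset.card_image_of_injOn injOn_singles, hsingle, add_comm, commonBins,
    Finset.card_filter_add_card_filter_not]

lemma card_singles_add_sum_card_commonBins :
    (singles I p).card + ∑ b ∈ commonBins I p, (content I p b).card = I.card := by
  simpa only [Finset.card_eq_sum_ones] using sum_singles_add_sum_commonBins fun _ => 1

/-! ### First Fit packings -/

/-- With the bins ordered by their opening, `p` packs the items like First Fit without a cardinality
constraint. The condition refers to the final loads only and not to the order of the items. -/
structure IsFirstFit [LinearOrder κ] (I : Finset ι) (s : ι → ℝ) (p : ι → κ) : Prop where
  pos : ∀ i ∈ I, 0 < s i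
  one_lt : ∀ i ∈ I, ∀ b ∈ bins I p, b < p i → 1 < load I s p b + s i

namespace IsFirstFit

variable [LinearOrder κ] {b' : κ}

lemma nonneg (h : IsFirstFit I s p) : ∀ i ∈ I, 0 ≤ s i := fun i hi => (h.pos i hi).le

lemma one_lt_load_add_of_lt (h : IsFirstFit I s p) (hb : b ∈ bins I p) (hlt : b < b')
    (hi : i ∈ content I p b') : 1 < load I s p b + s i := by
  obtain ⟨hiI, rfl⟩ := mem_content.1 hi
  exact h.one_lt i hiI b hb hlt

lemma one_lt_load_add_load (h : IsFirstFit I s p) (hb : b ∈ bins I p) (hb' : b' ∈ bins I p)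
    (hne : b ≠ b') : 1 < load I s p b + load I s p b' := by
  wlog hlt : b < b' generalizing b b'
  · rw [add_comm]
    exact this hb' hb hne.symm (hne.symm.lt_of_le (not_lt.1 hlt))
  obtain ⟨i, hi⟩ := content_nonempty hb'
  have hle : s i ≤ load I s p b' :=
    Finset.single_le_sum (fun j hj => h.nonneg j (content_subset hj)) hi
  linarith [h.one_lt_load_add_of_lt hb hlt hi]

lemma one_lt_add_load_of_mem_singles (h : IsFirstFit I s p) (hi : i ∈ singles I p)
    (hb : b ∈ bins I p) (hne : p i ≠ b) : 1 < s i + load I s p b := by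
  simpa only [load_of_mem_singles hi] using
    h.one_lt_load_add_load (mem_bins_of_mem (singles_subset hi)) hb hne

lemma one_lt_add_load_of_mem_commonBins (h : IsFirstFit I s p) (hi : i ∈ singles I p)
    (hb : b ∈ commonBins I p) : 1 < s i + load I s p b :=
  h.one_lt_add_load_of_mem_singles hi (commonBins_subset hb) (ne_of_mem_singles hi hb)

lemma one_lt_add_of_mem_singles (h : IsFirstFit I s p) (hi : i ∈ singles I p)
    (hj : j ∈ singles I p) (hne : i ≠ j) : 1 < s i + s j := by
  simpa only [load_of_mem_singles hj] using h.one_lt_add_load_of_mem_singles hi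
    (mem_bins_of_mem (singles_subset hj)) (injOn_singles.ne hi hj hne)

lemma injOn_singles_of_isPacking (h : IsFirstFit I s p) (hq : IsPacking I s q) :
    Set.InjOn q (singles I p) := fun i hi j hj hij => by
  by_contra hne
  have hsub : ({i, j} : Finset ι) ⊆ content I q (q i) := by
    rw [Finset.insert_subset_iff, Finset.singleton_subset_iff]
    exact ⟨mem_content_self (singles_subset hi), mem_content.2 ⟨singles_subset hj, hij.symm⟩⟩
  have hpair := Finset.sum_le_sum_of_subset_of_nonneg hsub
    fun x hx _ => h.nonneg x (content_subset hx)
  rw [Finset.sum_pair hne] at hpair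
  exact absurd (hpair.trans (hq (q i))) (not_le.2 (h.one_lt_add_of_mem_singles hi hj hne))

lemma card_singles_le (h : IsFirstFit I s p) (hq : IsPacking I s q) :
    (singles I p).card ≤ (bins I q).card :=
  Finset.card_le_card_of_injOn q (fun _ hi => mem_bins_of_mem (singles_subset hi))
    (h.injOn_singles_of_isPacking hq)

lemma two_mul_one_sub_load_lt (h : IsFirstFit I s p) (hb : b ∈ bins I p)
    (hb' : b' ∈ commonBins I p) (hlt : b < b') :
    2 * (1 - load I s p b) < load I s p b' := by
  obtain ⟨i, hi, j, hj, hij⟩ := Finset.one_lt_card.1 (mem_commonBins.1 hb').2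
  have hpair : ∑ x ∈ ({i, j} : Finset ι), s x ≤ load I s p b' :=
    Finset.sum_le_sum_of_subset_of_nonneg
      (Finset.insert_subset_iff.2 ⟨hi, Finset.singleton_subset_iff.2 hj⟩)
      fun x hx _ => h.nonneg x (content_subset hx)
  rw [Finset.sum_pair hij] at hpair
  linarith [h.one_lt_load_add_of_lt hb hlt hi, h.one_lt_load_add_of_lt hb hlt hj]

lemma two_mul_card_bins_le (h : IsFirstFit I s p) (hq : IsPacking I s q) :
    2 * (bins I p).card ≤ I.card + (bins I q).card := by
  have hcommon : (commonBins I p).card • 2 ≤ ∑ b ∈ commonBins I p, (content I p b).card :=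
    Finset.card_nsmul_le_sum _ _ _ fun b hb => (mem_commonBins.1 hb).2
  rw [smul_eq_mul] at hcommon
  have hbins := card_singles_add_card_commonBins (I := I) (p := p)
  have hitems := card_singles_add_sum_card_commonBins (I := I) (p := p)
  have hsingles := h.card_singles_le hq
  omega

/-! ### Few single items: comparing total sizes -/

lemma exists_forall_two_thirds_le_load (h : IsFirstFit I s p) (hC : (commonBins I p).Nonempty) :
    ∃ b₀ ∈ commonBins I p, ∀ b ∈ (commonBins I p).erase b₀, 2 / 3 ≤ load I s p b := by
  obtain ⟨b₀, hb₀, hmin⟩ := Finset.exists_min_image _ (load I s p) hC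
  refine ⟨b₀, hb₀, fun b hb => ?_⟩
  obtain ⟨hne, hb⟩ := Finset.mem_erase.1 hb
  rcases lt_or_gt_of_ne hne with hlt | hlt
  · linarith [hmin b hb, h.two_mul_one_sub_load_lt (commonBins_subset hb) hb₀ hlt]
  · linarith [hmin b hb, h.two_mul_one_sub_load_lt (commonBins_subset hb₀) hb hlt]

lemma two_mul_card_bins_le_of_singles_eq_empty (h : IsFirstFit I s p) (hq : IsPacking I s q)
    (hS : singles I p = ∅) : 2 * (bins I p).card ≤ 3 * (bins I q).card := by
  have hbins := card_singles_add_card_commonBins (I := I) (p := p)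
  rw [hS, Finset.card_empty, zero_add] at hbins
  rcases (commonBins I p).eq_empty_or_nonempty with hC | hC
  · simp [← hbins, hC]
  obtain ⟨b₀, hb₀, hload⟩ := h.exists_forall_two_thirds_le_load hC
  have hsize := hq.sum_le_card_bins
  rw [← sum_singles_add_sum_commonBins (p := p), hS, Finset.sum_empty, zero_add,
    ← Finset.add_sum_erase _ _ hb₀] at hsize
  have hcard := Finset.card_erase_add_one hb₀
  rcases ((commonBins I p).erase b₀).eq_empty_or_nonempty with hD | ⟨b₁, hb₁⟩
  · obtain ⟨i, hi⟩ := content_nonempty (commonBins_subset hb₀)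
    have hZ := Finset.card_pos.2 ⟨_, mem_bins_of_mem (p := q) (content_subset hi)⟩
    rw [hD, Finset.card_empty] at hcard
    omega
  have hpair := h.one_lt_load_add_load (commonBins_subset hb₀)
    (commonBins_subset (Finset.mem_of_mem_erase hb₁)) (Finset.ne_of_mem_erase hb₁).symm
  rw [← Finset.add_sum_erase _ _ hb₁] at hsize
  have hrest := Finset.card_nsmul_le_sum (((commonBins I p).erase b₀).erase b₁) (load I s p) (2 / 3)
    fun b hb => hload b (Finset.mem_of_mem_erase hb)
  have hcard' := Finset.card_erase_add_one hb₁
  rw [nsmul_eq_mul] at hrest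
  have hlt : 2 * ((((commonBins I p).erase b₀).erase b₁).card : ℝ) + 3 < 3 * (bins I q).card := by
    unfold load at *
    linarith
  have hlt' : 2 * (((commonBins I p).erase b₀).erase b₁).card + 3 < 3 * (bins I q).card := by
    exact_mod_cast hlt
  omega

lemma card_bins_le_of_le_half (h : IsFirstFit I s p) (hq : IsPacking I s q)
    (hC : (commonBins I p).Nonempty) (hj : j ∈ singles I p) (hj2 : s j ≤ 1 / 2) :
    4 * (commonBins I p).card + 3 * (singles I p).card ≤ 6 * (bins I q).card := by
  obtain ⟨b₀, hb₀, hload⟩ := h.exists_forall_two_thirds_le_load hC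
  have hsize := hq.sum_le_card_bins
  rw [← sum_singles_add_sum_commonBins (p := p), ← Finset.add_sum_erase _ _ hb₀,
    ← Finset.add_sum_erase _ _ hj] at hsize
  have hpair := h.one_lt_add_load_of_mem_commonBins hj hb₀
  have hcommon := Finset.card_nsmul_le_sum ((commonBins I p).erase b₀) (load I s p) (2 / 3) hload
  have hsingles := Finset.card_nsmul_le_sum ((singles I p).erase j) s (1 / 2) fun i hi => by
    linarith [h.one_lt_add_of_mem_singles (Finset.mem_of_mem_erase hi) hj
      (Finset.ne_of_mem_erase hi)]
  rw [nsmul_eq_mul] at hcommon hsingles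
  have hlt : 4 * (((commonBins I p).erase b₀).card : ℝ) + 3 * ((singles I p).erase j).card + 6
      < 6 * (bins I q).card := by
    unfold load at *
    linarith
  have hlt' : 4 * ((commonBins I p).erase b₀).card + 3 * ((singles I p).erase j).card + 6
      < 6 * (bins I q).card := by exact_mod_cast hlt
  have hC' := Finset.card_erase_add_one hb₀
  have hS' := Finset.card_erase_add_one hj
  omega

end IsFirstFit

/-! ### Counting quarters: a bound in terms of the number of items -/

/-- The number of the levels `1 / 4` and `1 / 2` that the size `x` exceeds. The strict comparison,
unlike `⌊4 * x⌋`, gives at most three quarters to the items of a bin with load `1`. -/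
def quarters (x : ℝ) : ℕ := if x ≤ 1 / 4 then 0 else if x ≤ 1 / 2 then 1 else 2

lemma quarters_le_two (x : ℝ) : quarters x ≤ 2 := by
  unfold quarters
  split_ifs <;> norm_num

lemma quarters_lt {x : ℝ} (hx : 0 < x) : (quarters x : ℝ) < 4 * x := by
  unfold quarters
  split_ifs <;> push_cast <;> linarith

lemma four_mul_le_quarters_add_one {x : ℝ} (hx : quarters x ≤ 1) :
    4 * x ≤ quarters x + 1 := by
  unfold quarters at *
  split_ifs at * <;> push_cast <;> linarith

lemma IsPacking.sum_quarters_le (hq : IsPacking I s q) (hs : ∀ i ∈ I, 0 < s i) :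
    ∑ i ∈ I, quarters (s i) ≤ 3 * (bins I q).card := by
  have hbin : ∀ o ∈ bins I q, ∑ i ∈ content I q o, quarters (s i) ≤ 3 := fun o ho => by
    have hlt : ∑ i ∈ content I q o, (quarters (s i) : ℝ) < ∑ i ∈ content I q o, 4 * s i :=
      Finset.sum_lt_sum_of_nonempty (content_nonempty ho)
        fun i hi => quarters_lt (hs i (content_subset hi))
    have hload : ∑ i ∈ content I q o, s i ≤ 1 := hq o
    rw [← Finset.mul_sum] at hlt
    have hlt_four : (∑ i ∈ content I q o, (quarters (s i) : ℝ)) < 4 := by linarith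
    exact Nat.le_of_lt_succ (by exact_mod_cast hlt_four)
  rw [← sum_content (p := q), mul_comm]
  exact Finset.sum_le_card_nsmul _ _ _ hbin

/-- The number of items plus the number of quarters in bin `b`. The bins of an optimal packing have
three quarters at most, while First Fit bins with several items have score at least four, with one
exception. -/
def score (I : Finset ι) (s : ι → ℝ) (p : ι → κ) (b : κ) : ℕ :=
  ∑ i ∈ content I p b, (quarters (s i) + 1)

lemma two_le_score (hb : b ∈ commonBins I p) : 2 ≤ score I s p b :=
  (mem_commonBins.1 hb).2.trans_le <| by
    rw [Finset.card_eq_sum_ones]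
    exact Finset.sum_le_sum fun _ _ => Nat.le_add_left _ _

lemma quarters_le_one_of_score_lt_four (hb : b ∈ commonBins I p) (hscore : score I s p b < 4)
    (hi : i ∈ content I p b) : quarters (s i) ≤ 1 := by
  have hrest : ((content I p b).erase i).card • 1 ≤
      ∑ j ∈ (content I p b).erase i, (quarters (s j) + 1) :=
    Finset.card_nsmul_le_sum _ _ _ fun _ _ => Nat.le_add_left _ _
  have hcard := Finset.card_erase_add_one hi
  have hcommon := (mem_commonBins.1 hb).2
  rw [score, ← Finset.add_sum_erase _ _ hi] at hscore
  rw [smul_eq_mul] at hrest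
  omega

lemma four_mul_load_le_score (hb : b ∈ commonBins I p) (hscore : score I s p b < 4) :
    4 * load I s p b ≤ score I s p b := by
  rw [load, score, Finset.mul_sum]
  push_cast
  exact Finset.sum_le_sum fun i hi =>
    four_mul_le_quarters_add_one (quarters_le_one_of_score_lt_four hb hscore hi)

lemma exists_le_quarter_of_score_lt_four (hb : b ∈ commonBins I p)
    (hscore : score I s p b < 4) : ∃ i ∈ content I p b, s i ≤ 1 / 4 := by
  by_contra! hlarge
  have hsum : (content I p b).card • 2 ≤ score I s p b :=
    Finset.card_nsmul_le_sum _ _ _ fun i hi => by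
      have hquarters := hlarge i hi
      unfold quarters
      split_ifs <;> first | omega | linarith
  have hcommon := (mem_commonBins.1 hb).2
  rw [smul_eq_mul] at hsum
  omega

lemma sum_eq_zero_or_exists_sum_eq {α : Type*} {T : Finset α} {d : α → ℕ}
    (h : ∀ a ∈ T, ∀ a' ∈ T, 0 < d a → 0 < d a' → a = a') :
    ∑ a ∈ T, d a = 0 ∨ ∃ a ∈ T, ∑ a ∈ T, d a = d a := by
  refine or_iff_not_imp_left.2 fun hne => ?_
  obtain ⟨a, ha, hda⟩ := Finset.exists_ne_zero_of_sum_ne_zero hne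
  refine ⟨a, ha, Finset.sum_eq_single_of_mem a ha fun a' ha' haa' => ?_⟩
  by_contra hda'
  exact haa' (h a' ha' a ha (Nat.pos_of_ne_zero hda') (Nat.pos_of_ne_zero hda))

namespace IsFirstFit

variable [LinearOrder κ] {b' : κ}

lemma eq_of_score_lt_four (h : IsFirstFit I s p) (hb : b ∈ commonBins I p)
    (hb' : b' ∈ commonBins I p) (hscore : score I s p b < 4) (hscore' : score I s p b' < 4) :
    b = b' := by
  by_contra hne
  wlog hlt : b < b' generalizing b b'
  · exact this hb' hb hscore' hscore (Ne.symm hne) (lt_of_le_of_ne (not_lt.1 hlt) (Ne.symm hne))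
  obtain ⟨i, hi, hsmall⟩ := exists_le_quarter_of_score_lt_four hb' hscore'
  have hfull := h.one_lt_load_add_of_lt (commonBins_subset hb) hlt hi
  have hload := four_mul_load_le_score hb hscore
  have hthree : (score I s p b : ℝ) ≤ 3 := by exact_mod_cast Nat.le_of_lt_succ hscore
  linarith

lemma eq_of_quarters_lt_two (h : IsFirstFit I s p) (hi : i ∈ singles I p) (hj : j ∈ singles I p)
    (hi' : quarters (s i) < 2) (hj' : quarters (s j) < 2) : i = j := by
  by_contra hne
  have hsum := h.one_lt_add_of_mem_singles hi hj hne
  have hqi := four_mul_le_quarters_add_one (Nat.le_of_lt_succ hi')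
  have hqj := four_mul_le_quarters_add_one (Nat.le_of_lt_succ hj')
  have hqi1 : (quarters (s i) : ℝ) ≤ 1 := by exact_mod_cast Nat.le_of_lt_succ hi'
  have hqj1 : (quarters (s j) : ℝ) ≤ 1 := by exact_mod_cast Nat.le_of_lt_succ hj'
  linarith

lemma four_le_score_add_quarters (h : IsFirstFit I s p) (hj : j ∈ singles I p)
    (hb : b ∈ commonBins I p) : 4 ≤ score I s p b + quarters (s j) := by
  by_contra! hlt
  have htwo := two_le_score (s := s) hb
  have hload := four_mul_load_le_score (s := s) hb (by omega)
  have hsize := four_mul_le_quarters_add_one (x := s j) (by omega)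
  have hfull := h.one_lt_add_load_of_mem_commonBins hj hb
  have hthree : (score I s p b : ℝ) + quarters (s j) ≤ 3 := by
    exact_mod_cast Nat.le_of_lt_succ hlt
  linarith

lemma sum_missing_quarters_le (h : IsFirstFit I s p) :
    ∑ i ∈ singles I p, (2 - quarters (s i)) + ∑ b ∈ commonBins I p, (4 - score I s p b) ≤ 2 := by
  have hsingles := sum_eq_zero_or_exists_sum_eq (T := singles I p)
    (d := fun i => 2 - quarters (s i)) fun i hi j hj hdi hdj =>
      h.eq_of_quarters_lt_two hi hj (by omega) (by omega)
  have hcommon := sum_eq_zero_or_exists_sum_eq (T := commonBins I p)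
    (d := fun b => 4 - score I s p b) fun b hb b' hb' hdb hdb' =>
      h.eq_of_score_lt_four hb hb' (by omega) (by omega)
  rcases hsingles with hS | ⟨j, hj, hS⟩ <;> rcases hcommon with hC | ⟨b, hb, hC⟩ <;> rw [hS, hC]
  · omega
  · have := two_le_score (s := s) hb
    omega
  · omega
  · have := h.four_le_score_add_quarters hj hb
    have := quarters_le_two (s j)
    omega

lemma four_mul_card_bins_le (h : IsFirstFit I s p) (hq : IsPacking I s q) :
    4 * (bins I p).card ≤ I.card + 4 * (bins I q).card + 2 := by
  have htotal := sum_singles_add_sum_commonBins (p := p) (I := I) fun i => quarters (s i) + 1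
  rw [Finset.sum_add_distrib (s := I), ← Finset.card_eq_sum_ones] at htotal
  have hsingles : (singles I p).card • 3 ≤
      ∑ i ∈ singles I p, ((quarters (s i) + 1) + (2 - quarters (s i))) :=
    Finset.card_nsmul_le_sum _ _ _ fun i _ => by omega
  have hcommon : (commonBins I p).card • 4 ≤
      ∑ b ∈ commonBins I p, (score I s p b + (4 - score I s p b)) :=
    Finset.card_nsmul_le_sum _ _ _ fun b _ => by omega
  simp only [Finset.sum_add_distrib (s := singles I p), smul_eq_mul] at hsingles
  rw [Finset.sum_add_distrib, smul_eq_mul] at hcommon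
  rw [Finset.sum_add_distrib (s := singles I p)] at htotal
  have hmissing := h.sum_missing_quarters_le
  have hquarters := hq.sum_quarters_le h.pos
  have hbins := card_singles_add_card_commonBins (I := I) (p := p)
  have hS := h.card_singles_le hq
  simp only [score] at *
  omega

end IsFirstFit

/-! ### Weights -/

/-- The bonus of an item of size `a` that is not alone in its bin. As a function of `a` it is `0` up
to `1 / 6 + y / 2`, then has slope `3`, and is constant from `1 / 3 - y / 2` on. The scaling makes
`5 - 3 * y` the target weight of a First Fit bin. -/
def bonus (y a : ℝ) : ℝ := 3 * max 0 (min (a - (1 / 6 + y / 2)) (1 / 6 - y))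

section Bonus

variable {y a x : ℝ}

lemma bonus_nonneg (y a : ℝ) : 0 ≤ bonus y a := by
  unfold bonus
  positivity

lemma bonus_le_max (hy : y ≤ 1 / 6) (a : ℝ) : bonus y a ≤ 3 * (1 / 6 - y) :=
  mul_le_mul_of_nonneg_left (max_le (sub_nonneg.2 hy) (min_le_right _ _)) (by norm_num)

lemma bonus_eq_zero (ha : a ≤ 1 / 6 + y / 2) : bonus y a = 0 := by
  rw [bonus, max_eq_left ((min_le_left _ _).trans (sub_nonpos.2 ha)), mul_zero]

lemma bonus_le_three_mul (ha : 1 / 6 + y / 2 ≤ a) : bonus y a ≤ 3 * (a - (1 / 6 + y / 2)) :=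
  mul_le_mul_of_nonneg_left (max_le (sub_nonneg.2 ha) (min_le_left _ _)) (by norm_num)

lemma three_mul_le_bonus (ha : 1 / 6 + y / 2 + x ≤ a) (hx : x ≤ 1 / 6 - y) : 3 * x ≤ bonus y a :=
  mul_le_mul_of_nonneg_left (le_max_of_le_right (le_min (by linarith) hx)) (by norm_num)

/-- The slope is such that a bin of the second packing without a single item has weight at most
`7.5 - 5.4 * y`, which is below the maximum `8.5 - 6 * y` by a fifth of the target `5 - 3 * y`. -/
lemma bonus_le_mul (hy0 : 0 ≤ y) (hy : y ≤ 1 / 6) (ha : 0 ≤ a) :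
    bonus y a ≤ (1.5 - 5.4 * y) * a := by
  rcases le_total a (1 / 6 + y / 2) with hsmall | hsmall
  · rw [bonus_eq_zero hsmall]
    exact mul_nonneg (by linarith) ha
  · rcases le_total a (1 / 3 - y / 2) with hlarge | hlarge
    · have hbonus := bonus_le_three_mul hsmall
      nlinarith [mul_nonneg hy0 ha, mul_nonneg hy0 (sub_nonneg.2 hlarge), mul_nonneg hy0 hy0]
    · have hbonus := bonus_le_max hy a
      nlinarith [mul_nonneg (sub_nonneg.2 hy) (sub_nonneg.2 hlarge), mul_nonneg hy0 hy0]

/-- Two items with positive bonus have total size above `1 / 3 + y`, and what exceeds that is paid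
with slope `3`; up to total size `1 / 2` this is no more than the largest bonus of one item. -/
lemma sum_bonus_le {T : Finset ι} {r : ℝ} (hy0 : 0 ≤ y) (hy : y ≤ 1 / 6)
    (hs : ∀ i ∈ T, 0 ≤ s i) (hr : ∑ i ∈ T, s i ≤ r) :
    ∑ i ∈ T, bonus y (s i) ≤ 3 * (1 / 6 - y) + 3 * max 0 (r - 1 / 2) := by
  set P := {i ∈ T | 1 / 6 + y / 2 < s i}
  have hbonus : ∑ i ∈ P, bonus y (s i) = ∑ i ∈ T, bonus y (s i) :=
    Finset.sum_filter_of_ne fun i _ hne => not_le.1 fun hle => hne (bonus_eq_zero hle)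
  have hsize : ∑ i ∈ P, s i ≤ r :=
    (Finset.sum_le_sum_of_subset_of_nonneg (Finset.filter_subset _ _)
      (fun i hi _ => hs i hi)).trans hr
  have hmax : 0 ≤ max 0 (r - 1 / 2) := le_max_left _ _
  have hmax' : r - 1 / 2 ≤ max 0 (r - 1 / 2) := le_max_right _ _
  rw [← hbonus]
  rcases Nat.lt_or_ge P.card 2 with hcard | hcard
  · have hsum : ∑ i ∈ P, bonus y (s i) ≤ P.card • (3 * (1 / 6 - y)) :=
      Finset.sum_le_card_nsmul _ _ _ fun i _ => bonus_le_max hy _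
    have hone : (P.card : ℝ) ≤ 1 := by exact_mod_cast Nat.le_of_lt_succ hcard
    rw [nsmul_eq_mul] at hsum
    nlinarith
  · have hsum : ∑ i ∈ P, bonus y (s i) ≤ ∑ i ∈ P, 3 * (s i - (1 / 6 + y / 2)) :=
      Finset.sum_le_sum fun i hi => bonus_le_three_mul (Finset.mem_filter.1 hi).2.le
    rw [← Finset.mul_sum, Finset.sum_sub_distrib, Finset.sum_const, nsmul_eq_mul] at hsum
    have htwo : (2 : ℝ) ≤ P.card := by exact_mod_cast hcard
    nlinarith

end Bonus

/-- The total bonus of the items in bin `b`. -/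
def binBonus (I : Finset ι) (s : ι → ℝ) (p : ι → κ) (y : ℝ) (b : κ) : ℝ :=
  ∑ i ∈ content I p b, bonus y (s i)

/-- The weight of item `i`. The constant added for an item that is alone in its bin raises the
weight of that bin to the target `5 - 3 * y` if the size of the item is `1 / 2`. -/
def weight (I : Finset ι) (s : ι → ℝ) (p : ι → κ) (y : ℝ) (i : ι) : ℝ :=
  6 * s i + if i ∈ singles I p then 2 - 3 * y else bonus y (s i)

/-- The weight of a single item of size `a` beyond the target, reduced by the additional bonus of
`3 * (1 / 2 - a)` that other items may have in its bin of the second packing if `a < 1 / 2`. -/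
def surplus (a : ℝ) : ℝ := 6 * (a - 1 / 2) - 3 * max 0 (1 / 2 - a)

section Weight

variable {T : Finset ι} {y : ℝ}

lemma binBonus_nonneg (I : Finset ι) (s : ι → ℝ) (p : ι → κ) (y : ℝ) (b : κ) :
    0 ≤ binBonus I s p y b := Finset.sum_nonneg fun _ _ => bonus_nonneg _ _

lemma sum_weight_of_forall_notMem_singles (hT : ∀ i ∈ T, i ∉ singles I p) :
    ∑ i ∈ T, weight I s p y i = 6 * ∑ i ∈ T, s i + ∑ i ∈ T, bonus y (s i) := by
  rw [Finset.mul_sum, ← Finset.sum_add_distrib]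
  exact Finset.sum_congr rfl fun i hi => by rw [weight, if_neg (hT i hi)]

lemma sum_weight_le_of_forall_notMem_singles (hy0 : 0 ≤ y) (hy : y ≤ 1 / 6)
    (hs : ∀ i ∈ T, 0 ≤ s i) (hsize : ∑ i ∈ T, s i ≤ 1) (hT : ∀ i ∈ T, i ∉ singles I p) :
    ∑ i ∈ T, weight I s p y i ≤ 7.5 - 5.4 * y := by
  have hbonus : ∑ i ∈ T, bonus y (s i) ≤ ∑ i ∈ T, (1.5 - 5.4 * y) * s i :=
    Finset.sum_le_sum fun i hi => bonus_le_mul hy0 hy (hs i hi)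
  rw [← Finset.mul_sum] at hbonus
  rw [sum_weight_of_forall_notMem_singles hT]
  nlinarith

lemma sum_weight_le_of_mem_singles (hy0 : 0 ≤ y) (hy : y ≤ 1 / 6) (hs : ∀ i ∈ T, 0 ≤ s i)
    (hsize : ∑ i ∈ T, s i ≤ 1) (hjT : j ∈ T) (hj : j ∈ singles I p)
    (huniq : ∀ i ∈ T.erase j, i ∉ singles I p) :
    ∑ i ∈ T, weight I s p y i ≤ 8.5 - 6 * y + 3 * max 0 (1 / 2 - s j) := by
  rw [← Finset.add_sum_erase T s hjT] at hsize
  have hbonus := sum_bonus_le (T := T.erase j) hy0 hy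
    (fun i hi => hs i (Finset.mem_of_mem_erase hi)) (le_sub_iff_add_le'.2 hsize)
  rw [show 1 - s j - 1 / 2 = 1 / 2 - s j by ring] at hbonus
  rw [← Finset.add_sum_erase T _ hjT, sum_weight_of_forall_notMem_singles huniq, weight,
    if_pos hj]
  linarith

lemma sum_weight_content (hb : b ∈ commonBins I p) :
    ∑ i ∈ content I p b, weight I s p y i = 6 * load I s p b + binBonus I s p y b :=
  sum_weight_of_forall_notMem_singles fun _ hi => notMem_singles hb hi

lemma sum_weight_singles :
    ∑ i ∈ singles I p, weight I s p y i = ∑ i ∈ singles I p, (6 * s i + (2 - 3 * y)) :=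
  Finset.sum_congr rfl fun i hi => by rw [weight, if_pos hi]

variable [LinearOrder κ]

lemma IsFirstFit.sum_weight_content_le (h : IsFirstFit I s p) (hq : IsPacking I s q)
    (hy0 : 0 ≤ y) (hy : y ≤ 1 / 6) (o : τ) :
    ∑ i ∈ content I q o, weight I s p y i ≤
      7.5 - 5.4 * y + ∑ i ∈ content (singles I p) q o, (1 - 0.6 * y + 3 * max 0 (1 / 2 - s i)) := by
  have hs : ∀ i ∈ content I q o, 0 ≤ s i := fun i hi => h.nonneg i (content_subset hi)
  rcases (content (singles I p) q o).eq_empty_or_nonempty with hempty | ⟨j, hj⟩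
  · rw [hempty, Finset.sum_empty, add_zero]
    refine sum_weight_le_of_forall_notMem_singles hy0 hy hs (hq o) fun i hi hi' => ?_
    exact Finset.notMem_empty i (hempty ▸ mem_content.2 ⟨hi', (mem_content.1 hi).2⟩)
  · obtain ⟨hjS, rfl⟩ := mem_content.1 hj
    have huniq : ∀ i ∈ singles I p, q i = q j → i = j := fun i hi hij =>
      h.injOn_singles_of_isPacking hq hi hjS hij
    have hcontent : content (singles I p) q (q j) = {j} :=
      Finset.eq_singleton_iff_unique_mem.2
        ⟨hj, fun i hi => huniq i (mem_content.1 hi).1 (mem_content.1 hi).2⟩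
    rw [hcontent, Finset.sum_singleton]
    refine (sum_weight_le_of_mem_singles hy0 hy hs (hq (q j)) (content_mono singles_subset hj) hjS
      fun i hi hi' => ?_).trans (by linarith)
    obtain ⟨hne, hi⟩ := Finset.mem_erase.1 hi
    exact hne (huniq i hi' (mem_content.1 hi).2)

lemma IsFirstFit.sum_weight_le (h : IsFirstFit I s p) (hq : IsPacking I s q)
    (hy0 : 0 ≤ y) (hy : y ≤ 1 / 6) :
    ∑ i ∈ I, weight I s p y i ≤ (7.5 - 5.4 * y) * (bins I q).card +
      ∑ i ∈ singles I p, (1 - 0.6 * y + 3 * max 0 (1 / 2 - s i)) := by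
  have hsum := Finset.sum_le_sum fun o (_ : o ∈ bins I q) => h.sum_weight_content_le hq hy0 hy o
  rwa [sum_content, Finset.sum_add_distrib, Finset.sum_const, nsmul_eq_mul,
    sum_content_of_subset singles_subset, mul_comm] at hsum

lemma IsFirstFit.sum_commonBins_add_sum_surplus_le (h : IsFirstFit I s p) (hq : IsPacking I s q)
    (hy0 : 0 ≤ y) (hy : y ≤ 1 / 6) :
    ∑ b ∈ commonBins I p, (6 * load I s p b + binBonus I s p y b) +
        ∑ i ∈ singles I p, surplus (s i) + (5 - 3 * y) * (singles I p).card ≤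
      (7.5 - 5.4 * y) * (bins I q).card + (1 - 0.6 * y) * (singles I p).card := by
  have hweight := h.sum_weight_le hq hy0 hy
  rw [← sum_singles_add_sum_commonBins (p := p), sum_weight_singles,
    Finset.sum_congr rfl fun b hb => sum_weight_content hb] at hweight
  have hsurplus : ∑ i ∈ singles I p, surplus (s i) =
      ∑ i ∈ singles I p, (6 * s i + (2 - 3 * y)) -
        ∑ i ∈ singles I p, (1 - 0.6 * y + 3 * max 0 (1 / 2 - s i)) -
        (singles I p).card • ((5 - 3 * y) - (1 - 0.6 * y)) := by
    rw [← Finset.sum_const, ← Finset.sum_sub_distrib, ← Finset.sum_sub_distrib]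
    exact Finset.sum_congr rfl fun i _ => by rw [surplus]; ring
  rw [nsmul_eq_mul] at hsurplus
  linarith

end Weight

/-! ### Amortizing the bonus along the common bins -/

lemma card_sub_one_mul_add_le_sum [LinearOrder κ] {C : Finset κ} {F G : κ → ℝ} {a m : κ} {c : ℝ}
    (ha : IsLeast (C : Set κ) a) (hm : IsGreatest (C : Set κ) m)
    (hstep : ∀ b ∈ C, ∀ b' ∈ C, b < b' → c ≤ F b + G b') :
    c * (C.card - 1) + F m + G a ≤ ∑ b ∈ C, (F b + G b) := by
  induction C using Finset.induction_on_max generalizing m with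
  | empty => simpa using ha.1
  | insert d C hd ih =>
    have hdC : d ∉ C := fun hd' => lt_irrefl d (hd d hd')
    have hdgreatest : IsGreatest ((insert d C : Finset κ) : Set κ) d :=
      ⟨by simp, fun b hb => (Finset.mem_insert.1 hb).elim Eq.le fun hb => (hd b hb).le⟩
    obtain rfl := hm.unique hdgreatest
    rw [Finset.sum_insert hdC, Finset.card_insert_of_notMem hdC]
    rcases C.eq_empty_or_nonempty with rfl | hC
    · have hma : a = m := by simpa using ha.1
      simp [hma]
    have hmax := C.max'_mem hC
    have ham : a ≠ m := ((ha.2 (Finset.mem_insert_of_mem hmax)).trans_lt (hd _ hmax)).ne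
    have hchain := ih (m := C.max' hC)
      ⟨Finset.mem_of_mem_insert_of_ne ha.1 ham, fun b hb => ha.2 (Finset.mem_insert_of_mem hb)⟩
      (C.isGreatest_max' hC)
      fun b hb b' hb' => hstep b (Finset.mem_insert_of_mem hb) b' (Finset.mem_insert_of_mem hb')
    have hlast := hstep _ (Finset.mem_insert_of_mem hmax) m (Finset.mem_insert_self m C) (hd _ hmax)
    push_cast
    linarith

lemma half_le_binBonus_or_le_binBonus {y : ℝ} (hy : 0 ≤ y) (hcard : (content I p b).card ≤ 3) :
    1 / 2 - 3 * y ≤ binBonus I s p y b ∨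
      3 * load I s p b - 3 / 2 - 9 / 2 * y ≤ binBonus I s p y b := by
  by_cases hlarge : ∃ i ∈ content I p b, 1 / 3 - y / 2 ≤ s i
  · left
    obtain ⟨i, hi, hsize⟩ := hlarge
    have hbonus := three_mul_le_bonus (y := y) (a := s i) (x := 1 / 6 - y) (by linarith) le_rfl
    have hle : bonus y (s i) ≤ binBonus I s p y b :=
      Finset.single_le_sum (f := fun i => bonus y (s i)) (fun j _ => bonus_nonneg _ _) hi
    linarith
  · right
    push Not at hlarge
    have hbonus : ∑ i ∈ content I p b, 3 * (s i - (1 / 6 + y / 2)) ≤ binBonus I s p y b :=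
      Finset.sum_le_sum fun i hi =>
        three_mul_le_bonus (by linarith) (by linarith [hlarge i hi])
    rw [← Finset.mul_sum, Finset.sum_sub_distrib, Finset.sum_const, nsmul_eq_mul, ← load] at hbonus
    have hthree : ((content I p b).card : ℝ) ≤ 3 := by exact_mod_cast hcard
    nlinarith

/-- The common bins reach the target weight `5 - 3 * y` on average with slack `v`, up to a deficit
of the last common bin `m`. The slack comes from the bonus of the first common bin, which does not
pay for a preceding bin. -/
structure Amortizes (I : Finset ι) (s : ι → ℝ) (p : ι → κ) (m : κ) (y v : ℝ) : Prop where
  nonneg : 0 ≤ y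
  le_sixth : y ≤ 1 / 6
  slack_nonneg : 0 ≤ v
  half_le_slack : 2 ≤ (commonBins I p).card → (∀ b ∈ commonBins I p, (content I p b).card ≤ 3) →
    1 / 2 - 3 * y ≤ v
  target_le : (5 - 3 * y) * (commonBins I p).card + v ≤
    ∑ b ∈ commonBins I p, (6 * load I s p b + binBonus I s p y b) + 1 + 3 * y +
      6 * max 0 (1 / 2 - load I s p m)

namespace IsFirstFit

variable [LinearOrder κ] {a b' m e : κ} {y x : ℝ}

lemma six_mul_le_binBonus (h : IsFirstFit I s p) (hb : b ∈ bins I p)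
    (hb' : b' ∈ commonBins I p) (hlt : b < b') (hx0 : 0 ≤ x) (hx : x ≤ 1 / 6 - y)
    (hload : load I s p b + x ≤ 5 / 6 - y / 2) : 6 * x ≤ binBonus I s p y b' := by
  have hsum : (content I p b').card • (3 * x) ≤ binBonus I s p y b' :=
    Finset.card_nsmul_le_sum _ _ _ fun i hi => by
      have hsize := h.one_lt_load_add_of_lt hb hlt hi
      exact three_mul_le_bonus (by linarith) hx
  have htwo : (2 : ℝ) ≤ (content I p b').card := by exact_mod_cast (mem_commonBins.1 hb').2
  rw [nsmul_eq_mul] at hsum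
  nlinarith

lemma target_le_load_add_binBonus (h : IsFirstFit I s p) (hb : b ∈ bins I p)
    (hb' : b' ∈ commonBins I p) (hlt : b < b') (hload : 2 / 3 + y / 2 ≤ load I s p b) :
    5 - 3 * y ≤ 6 * load I s p b + binBonus I s p y b' := by
  rcases le_total (5 / 6 - y / 2) (load I s p b) with hfull | hfull
  · linarith [binBonus_nonneg I s p y b']
  · linarith [h.six_mul_le_binBonus (x := 5 / 6 - y / 2 - load I s p b) (y := y) hb hb' hlt
      (by linarith) (by linarith) (by linarith)]

lemma thirteen_sub_le_load_add_binBonus (h : IsFirstFit I s p) (hb : b ∈ bins I p)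
    (hb' : b' ∈ commonBins I p) (hlt : b < b') (hload : load I s p b ≤ 2 / 3) :
    13 - 12 * load I s p b ≤ 6 * load I s p b' + binBonus I s p 0 b' := by
  linarith [h.two_mul_one_sub_load_lt hb hb' hlt,
    h.six_mul_le_binBonus (x := 1 / 6) (y := 0) hb hb' hlt (by norm_num) (by norm_num)
      (by linarith)]

lemma exists_amortizes_of_two_thirds_le (h : IsFirstFit I s p)
    (hm : IsGreatest (commonBins I p : Set κ) m)
    (hload : ∀ b ∈ commonBins I p, b < m → 2 / 3 ≤ load I s p b) :
    ∃ y v, Amortizes I s p m y v := by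
  obtain ⟨y, hy⟩ : ∃ y, y = max 0 (min (2 / 3 - load I s p m) (1 / 6)) := ⟨_, rfl⟩
  have hy0 : 0 ≤ y := hy ▸ le_max_left _ _
  have hbefore : ∀ b ∈ commonBins I p, b < m → 2 / 3 + y / 2 ≤ load I s p b := fun b hb hlt => by
    have hpair := h.two_mul_one_sub_load_lt (commonBins_subset hb) hm.1 hlt
    have hmin := min_le_left (2 / 3 - load I s p m) (1 / 6)
    rcases max_choice 0 (min (2 / 3 - load I s p m) (1 / 6)) with hmax | hmax <;>
      rw [hmax] at hy <;> linarith [hload b hb hlt]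
  obtain ⟨a, ha⟩ : ∃ a, IsLeast (commonBins I p : Set κ) a := ⟨_, Finset.isLeast_min' _ ⟨m, hm.1⟩⟩
  refine ⟨y, binBonus I s p y a, hy0, hy ▸ max_le (by norm_num) (min_le_right _ _),
    binBonus_nonneg .., fun hcard hthree => ?_, ?_⟩
  · obtain ⟨b, hb, hbm⟩ := Finset.exists_mem_ne hcard m
    have hlt := (ha.2 hb).trans_lt (lt_of_le_of_ne (hm.2 hb) hbm)
    rcases half_le_binBonus_or_le_binBonus (s := s) hy0 (hthree a ha.1) with hbonus | hbonus
    · exact hbonus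
    · linarith [hbefore a ha.1 hlt]
  · have hchain := card_sub_one_mul_add_le_sum ha hm fun b hb b' hb' hlt =>
      h.target_le_load_add_binBonus (commonBins_subset hb) hb' hlt
        (hbefore b hb (hlt.trans_le (hm.2 hb')))
    have hdeficit : 4 - 6 * y ≤ 6 * load I s p m + 6 * max 0 (1 / 2 - load I s p m) := by
      have hnonneg := le_max_left 0 (1 / 2 - load I s p m)
      have hhalf := le_max_right 0 (1 / 2 - load I s p m)
      have hmin := le_max_right 0 (min (2 / 3 - load I s p m) (1 / 6))
      rw [← hy] at hmin
      rcases min_choice (2 / 3 - load I s p m) (1 / 6) with hmin' | hmin' <;> rw [hmin'] at hmin <;>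
        linarith
    linarith

/-- The bins up to `e` are amortized by the chain argument with `y = 0`, and every later bin exceeds
the target by the large sizes of its items, which do not fit in `e`. -/
lemma five_mul_card_commonBins_add_le_sum (h : IsFirstFit I s p)
    (ha : IsLeast (commonBins I p : Set κ) a) (he : e ∈ commonBins I p)
    (hm : m ∈ commonBins I p) (hem : e < m) (hload : load I s p e ≤ 2 / 3) :
    5 * (commonBins I p).card + (binBonus I s p 0 a + (4 - 6 * load I s p e)) ≤
      ∑ b ∈ commonBins I p, (6 * load I s p b + binBonus I s p 0 b) + 1 := by
  have hfirst := card_sub_one_mul_add_le_sum (C := {b ∈ commonBins I p | b ≤ e}) (a := a) (m := e)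
    (F := fun b => 6 * load I s p b) (G := binBonus I s p 0) (c := 5)
    ⟨by simpa using ⟨ha.1, ha.2 he⟩, fun b hb => ha.2 (Finset.mem_filter.1 hb).1⟩
    ⟨by simpa using he, fun b hb => (Finset.mem_filter.1 hb).2⟩ fun b hb b' hb' hlt => by
      rw [Finset.mem_filter] at hb hb'
      have hpair := h.two_mul_one_sub_load_lt (commonBins_subset hb.1) he (hlt.trans_le hb'.2)
      linarith [h.target_le_load_add_binBonus (y := 0) (commonBins_subset hb.1) hb'.1 hlt
        (by linarith)]
  have hlast := Finset.card_nsmul_le_sum {b ∈ commonBins I p | ¬ b ≤ e}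
    (fun b => 6 * load I s p b + binBonus I s p 0 b) (13 - 12 * load I s p e) fun b hb => by
      rw [Finset.mem_filter, not_le] at hb
      exact h.thirteen_sub_le_load_add_binBonus (commonBins_subset he) hb.1 hb.2 hload
  have hpos : 0 < ({b ∈ commonBins I p | ¬ b ≤ e}).card :=
    Finset.card_pos.2 ⟨m, Finset.mem_filter.2 ⟨hm, not_le.2 hem⟩⟩
  have hone : (1 : ℝ) ≤ ({b ∈ commonBins I p | ¬ b ≤ e}).card := by exact_mod_cast hpos
  have hcard : (({b ∈ commonBins I p | b ≤ e}).card : ℝ) +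
      ({b ∈ commonBins I p | ¬ b ≤ e}).card = (commonBins I p).card := by
    exact_mod_cast Finset.card_filter_add_card_filter_not _
  rw [nsmul_eq_mul] at hlast
  rw [← Finset.sum_filter_add_sum_filter_not (commonBins I p) (· ≤ e), ← hcard]
  nlinarith

lemma exists_amortizes_of_load_le_two_thirds (h : IsFirstFit I s p) (he : e ∈ commonBins I p)
    (hm : m ∈ commonBins I p) (hem : e < m) (hload : load I s p e ≤ 2 / 3) :
    ∃ y v, Amortizes I s p m y v := by
  obtain ⟨a, ha⟩ : ∃ a, IsLeast (commonBins I p : Set κ) a := ⟨_, Finset.isLeast_min' _ ⟨m, hm⟩⟩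
  refine ⟨0, binBonus I s p 0 a + (4 - 6 * load I s p e), le_rfl, by norm_num,
    by linarith [binBonus_nonneg I s p 0 a], fun _ hthree => ?_, ?_⟩
  · rcases half_le_binBonus_or_le_binBonus (s := s) le_rfl (hthree a ha.1) with hbonus | hbonus
    · linarith
    · rcases (ha.2 he).eq_or_lt with rfl | hlt
      · linarith
      · linarith [h.two_mul_one_sub_load_lt (commonBins_subset ha.1) he hlt]
  · linarith [h.five_mul_card_commonBins_add_le_sum ha he hm hem hload,
      le_max_left 0 (1 / 2 - load I s p m)]

lemma exists_amortizes (h : IsFirstFit I s p) (hm : IsGreatest (commonBins I p : Set κ) m) :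
    ∃ y v, Amortizes I s p m y v := by
  by_cases hload : ∀ b ∈ commonBins I p, b < m → 2 / 3 ≤ load I s p b
  · exact h.exists_amortizes_of_two_thirds_le hm hload
  · push Not at hload
    obtain ⟨e, he, hem, hload⟩ := hload
    exact h.exists_amortizes_of_load_le_two_thirds he hm.1 hem hload.le

end IsFirstFit

/-! ### The bound without a cardinality constraint -/

namespace IsFirstFit

variable [LinearOrder κ]

lemma six_mul_max_lt_sum_surplus (h : IsFirstFit I s p) (hS : (singles I p).Nonempty)
    (hhalf : (∃ j ∈ singles I p, s j ≤ 1 / 2) → 3 ≤ (singles I p).card)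
    (hb : b ∈ commonBins I p) :
    6 * max 0 (1 / 2 - load I s p b) < ∑ i ∈ singles I p, surplus (s i) := by
  unfold surplus
  by_cases hsmall : ∃ j ∈ singles I p, s j ≤ 1 / 2
  · have hthree := hhalf hsmall
    obtain ⟨j, hj, hj2⟩ := hsmall
    have hcard := Finset.card_erase_add_one hj
    have hothers : ((singles I p).erase j).card • (6 * (1 / 2 - s j)) <
        ∑ i ∈ (singles I p).erase j, (6 * (s i - 1 / 2) - 3 * max 0 (1 / 2 - s i)) := by
      rw [← Finset.sum_const]
      refine Finset.sum_lt_sum_of_nonempty (Finset.card_pos.1 (by omega)) fun i hi => ?_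
      obtain ⟨hij, hi⟩ := Finset.mem_erase.1 hi
      have hpair := h.one_lt_add_of_mem_singles hi hj hij
      rw [max_eq_left (by linarith)]
      linarith
    have htwo : (2 : ℝ) ≤ ((singles I p).erase j).card := by exact_mod_cast (by omega)
    rw [nsmul_eq_mul] at hothers
    rw [max_eq_left (by linarith [h.one_lt_add_load_of_mem_commonBins hj hb]),
      ← Finset.add_sum_erase _ _ hj, max_eq_right (by linarith)]
    nlinarith
  · push Not at hsmall
    obtain ⟨j, hj⟩ := hS
    have hnonneg : ∀ i ∈ singles I p, 0 ≤ 6 * (s i - 1 / 2) - 3 * max 0 (1 / 2 - s i) :=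
      fun i hi => by
        have hlarge := hsmall i hi
        rw [max_eq_left (by linarith)]
        linarith
    refine lt_of_lt_of_le ?_ (Finset.single_le_sum hnonneg hj)
    have hlarge := hsmall j hj
    have hpair := h.one_lt_add_load_of_mem_commonBins hj hb
    rw [max_eq_left (b := 1 / 2 - s j) (by linarith)]
    rcases max_choice 0 (1 / 2 - load I s p b) with hmax | hmax <;> rw [hmax] <;> linarith

end IsFirstFit

namespace Amortizes

variable [LinearOrder κ] {m : κ} {y v : ℝ}

/-- The weights give `10 * N ≤ 17 * Z + 2` for `N` First Fit bins and `Z` bins of the second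
packing, up to terms that improve this bound if some bin of the second packing has no single item,
if there is slack, or if `Z` is large. -/
lemma weighted_card_lt (hA : Amortizes I s p m y v) (h : IsFirstFit I s p)
    (hq : IsPacking I s q)
    (hsurplus : 6 * max 0 (1 / 2 - load I s p m) < ∑ i ∈ singles I p, surplus (s i)) :
    (0.5 - 0.3 * y) * (10 * (bins I p).card - 17 * (bins I q).card - 2 +
        2 * ((bins I q).card - (singles I p).card)) + v <
      0.9 * y * (4 - (bins I q).card) := by
  have hweight := h.sum_commonBins_add_sum_surplus_le hq hA.nonneg hA.le_sixth
  have hbins : ((bins I p).card : ℝ) = (singles I p).card + (commonBins I p).card := by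
    exact_mod_cast card_singles_add_card_commonBins.symm
  rw [hbins]
  linarith [hA.target_le]

lemma ten_mul_card_bins_le_or (hA : Amortizes I s p m y v) (h : IsFirstFit I s p)
    (hq : IsPacking I s q)
    (hsurplus : 6 * max 0 (1 / 2 - load I s p m) < ∑ i ∈ singles I p, surplus (s i)) :
    10 * (bins I p).card ≤ 17 * (bins I q).card ∨
      10 * (bins I p).card = 17 * (bins I q).card + 1 ∧
        ∃ b ∈ commonBins I p, 3 < (content I p b).card := by
  have hweight := hA.weighted_card_lt h hq hsurplus
  have hSpos := Finset.card_pos.2 <| Finset.nonempty_of_sum_ne_zero <|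
    ((mul_nonneg (by norm_num) (le_max_left _ _)).trans_lt hsurplus).ne'
  obtain ⟨hy0, hy, hv, hslack, -⟩ := hA
  have hbins := card_singles_add_card_commonBins (I := I) (p := p)
  have hS := h.card_singles_le hq
  generalize (bins I p).card = N at *
  generalize (bins I q).card = Z at *
  generalize (singles I p).card = S at *
  have hle : 10 * N + 2 * Z ≤ 17 * Z + 2 * S + 2 := by
    by_contra! hlt
    have hlt' : (17 : ℝ) * Z + 2 * S + 3 ≤ 10 * N + 2 * Z := by exact_mod_cast hlt
    have hZ : (1 : ℝ) ≤ Z := by exact_mod_cast (by omega : 1 ≤ Z)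
    nlinarith
  have hlt : 4 ≤ Z → 10 * N + 2 * Z < 17 * Z + 2 * S + 2 := fun hZ => by
    by_contra! hge
    have hge' : (17 : ℝ) * Z + 2 * S + 2 ≤ 10 * N + 2 * Z := by exact_mod_cast hge
    have hZ' : (4 : ℝ) ≤ Z := by exact_mod_cast hZ
    nlinarith
  by_cases hN : 10 * N ≤ 17 * Z
  · exact .inl hN
  obtain ⟨hN, rfl⟩ : 10 * N = 17 * Z + 1 ∧ S = Z := by omega
  refine .inr ⟨hN, ?_⟩
  by_contra! hthree
  have hslack := hslack (by omega) hthree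
  have hN' : (10 : ℝ) * N = 17 * S + 1 := by exact_mod_cast hN
  have hZ : (7 : ℝ) ≤ S := by exact_mod_cast (by omega : 7 ≤ S)
  rw [hN'] at hweight
  nlinarith

end Amortizes

namespace IsFirstFit

variable [LinearOrder κ]

lemma two_mul_card_bins_add_two_le (h : IsFirstFit I s p) (hq : IsPacking I s q)
    (hb : b ∈ commonBins I p) (hcard : 3 < (content I p b).card) :
    2 * (bins I p).card + 2 ≤ I.card + (bins I q).card := by
  have hitems := card_singles_add_sum_card_commonBins (I := I) (p := p)
  have hothers := Finset.card_nsmul_le_sum ((commonBins I p).erase b)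
    (fun b => (content I p b).card) 2 fun b hb => (mem_commonBins.1 (Finset.mem_of_mem_erase hb)).2
  rw [← Finset.add_sum_erase _ _ hb] at hitems
  rw [smul_eq_mul] at hothers
  have hC := Finset.card_erase_add_one hb
  have hbins := card_singles_add_card_commonBins (I := I) (p := p)
  have hS := h.card_singles_le hq
  omega

lemma ten_mul_card_bins_le_or (h : IsFirstFit I s p) (hq : IsPacking I s q) :
    10 * (bins I p).card ≤ 17 * (bins I q).card ∨
      10 * (bins I p).card = 17 * (bins I q).card + 1 ∧
        2 * (bins I p).card + 2 ≤ I.card + (bins I q).card := by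
  have hbins := card_singles_add_card_commonBins (I := I) (p := p)
  have hsingles := h.card_singles_le hq
  rcases (commonBins I p).eq_empty_or_nonempty with hC | hC
  · rw [hC, Finset.card_empty] at hbins
    omega
  rcases (singles I p).eq_empty_or_nonempty with hS | hS
  · have := h.two_mul_card_bins_le_of_singles_eq_empty hq hS
    omega
  by_cases hhalf : (∃ j ∈ singles I p, s j ≤ 1 / 2) → 3 ≤ (singles I p).card
  · have hm := Finset.isGreatest_max' _ hC
    obtain ⟨y, v, hA⟩ := h.exists_amortizes hm
    refine (hA.ten_mul_card_bins_le_or h hq (h.six_mul_max_lt_sum_surplus hS hhalf hm.1)).imp_right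
      fun ⟨hN, b, hb, hcard⟩ => ⟨hN, h.two_mul_card_bins_add_two_le hq hb hcard⟩
  · push Not at hhalf
    obtain ⟨⟨j, hj, hj2⟩, hcard⟩ := hhalf
    have := h.card_bins_le_of_le_half hq hC hj hj2
    have := Finset.card_pos.2 hS
    have := Finset.card_pos.2 hC
    omega

end IsFirstFit

/-! ### The cardinality constraint -/

/-- The items in bins with fewer than `k` items. Under the cardinality constraint `k`, First Fit
skips the bins of these items only for lack of capacity. -/
def underfull (k : ℕ) (I : Finset ι) (p : ι → κ) : Finset ι :=
  {i ∈ I | (content I p (p i)).card < k}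

lemma mem_underfull {k : ℕ} : i ∈ underfull k I p ↔ i ∈ I ∧ (content I p (p i)).card < k :=
  Finset.mem_filter

lemma underfull_subset {k : ℕ} : underfull k I p ⊆ I := Finset.filter_subset _ _

lemma bins_underfull {k : ℕ} :
    bins (underfull k I p) p = {b ∈ bins I p | (content I p b).card < k} := by
  ext b
  rw [mem_bins, Finset.mem_filter]
  constructor
  · rintro ⟨i, hi, rfl⟩
    exact ⟨mem_bins_of_mem (underfull_subset hi), (mem_underfull.1 hi).2⟩
  · rintro ⟨hb, hcard⟩
    obtain ⟨i, hi, rfl⟩ := mem_bins.1 hb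
    exact ⟨i, mem_underfull.2 ⟨hi, hcard⟩, rfl⟩

lemma content_underfull {k : ℕ} (hb : (content I p b).card < k) :
    content (underfull k I p) p b = content I p b := by
  refine (content_mono underfull_subset).antisymm fun i hi => ?_
  obtain ⟨hiI, rfl⟩ := mem_content.1 hi
  exact mem_content_self (mem_underfull.2 ⟨hiI, hb⟩)

lemma isFirstFit_underfull [LinearOrder κ] {k : ℕ} (hs : ∀ i ∈ I, 0 < s i)
    (hp : ∀ i ∈ I, ∀ b ∈ bins I p, b < p i → k ≤ (content I p b).card ∨ 1 < load I s p b + s i) :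
    IsFirstFit (underfull k I p) s p where
  pos i hi := hs i (underfull_subset hi)
  one_lt i hi b hb hlt := by
    rw [bins_underfull, Finset.mem_filter] at hb
    rw [load, content_underfull hb.2]
    exact (hp i (underfull_subset hi) b hb.1 hlt).resolve_left hb.2.not_ge

lemma mul_add_card_underfull_le (k : ℕ) (I : Finset ι) (p : ι → κ) :
    k * {b ∈ bins I p | ¬ (content I p b).card < k}.card + (underfull k I p).card ≤ I.card := by
  have hfull := Finset.card_nsmul_le_sum {b ∈ bins I p | ¬ (content I p b).card < k}
    (fun b => (content I p b).card) k fun b hb => not_lt.1 (Finset.mem_filter.1 hb).2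
  have hrest : ∑ b ∈ bins I p with (content I p b).card < k, (content I p b).card
      = (underfull k I p).card := by
    rw [← sum_card_content (p := p), bins_underfull]
    exact Finset.sum_congr rfl fun b hb => by rw [content_underfull (Finset.mem_filter.1 hb).2]
  rw [← sum_card_content (I := I) (p := p),
    ← Finset.sum_filter_add_sum_filter_not (bins I p) fun b => (content I p b).card < k, hrest,
    mul_comm, add_comm]
  exact Nat.add_le_add_left hfull _

lemma card_le_mul_card_bins {k : ℕ} (hq : ∀ b, (content I q b).card ≤ k) :
    I.card ≤ k * (bins I q).card := by
  rw [← sum_card_content (p := q), mul_comm]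
  exact Finset.sum_le_card_nsmul _ _ _ fun b _ => hq b

/-- `K` is the number of full bins, and `N` that of the other bins, which hold `n` items. -/
lemma ten_mul_mul_add_le {k K N n Z : ℕ} (hk : 2 ≤ k) (hcount : k * K + n ≤ k * Z)
    (hN : 2 * N ≤ n + Z) (hdich : 10 * N ≤ 17 * Z ∨ 10 * N = 17 * Z + 1 ∧ 8 * Z ≤ 3 * n) :
    10 * k * (K + N) + 24 * Z ≤ 27 * k * Z := by
  rcases hdich with h17 | ⟨h17, hn⟩
  · obtain ⟨j, rfl⟩ := Nat.exists_eq_add_of_le hk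
    nlinarith [Nat.mul_le_mul_left j h17]
  have hkN : 10 * k * N = 17 * k * Z + k := by linear_combination k * h17
  by_cases hkZ : 3 * k < 8 * Z
  · nlinarith
  have hKZ : K < Z := by
    by_contra! hle
    have := Nat.mul_le_mul_left k hle
    omega
  nlinarith [Nat.mul_le_mul_left k (Nat.succ_le_of_lt hKZ)]

theorem ten_mul_mul_card_bins_add_le [LinearOrder κ] {k : ℕ} (hk : 2 ≤ k) (hs : ∀ i ∈ I, 0 < s i)
    (hp : ∀ i ∈ I, ∀ b ∈ bins I p, b < p i → k ≤ (content I p b).card ∨ 1 < load I s p b + s i)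
    (hq : IsPacking I s q) (hqk : ∀ b, (content I q b).card ≤ k) :
    10 * k * (bins I p).card + 24 * (bins I q).card ≤ 27 * k * (bins I q).card := by
  have hff := isFirstFit_underfull hs hp
  have hq' : IsPacking (underfull k I p) s q := hq.mono (fun i hi => (hs i hi).le) underfull_subset
  have hZ := Finset.card_le_card (bins_mono (p := q) (underfull_subset (k := k) (I := I) (p := p)))
  have hbins := Finset.card_filter_add_card_filter_not (s := bins I p)
    fun b => (content I p b).card < k
  rw [← bins_underfull] at hbins
  have hN := hff.two_mul_card_bins_le hq'
  have hquarter := hff.four_mul_card_bins_le hq'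
  have hdich := hff.ten_mul_card_bins_le_or hq'
  rw [← hbins, add_comm (bins (underfull k I p) p).card]
  exact ten_mul_mul_add_le hk
    ((mul_add_card_underfull_le k I p).trans (card_le_mul_card_bins hqk)) (by omega) (by omega)

/-! ### The run of First Fit -/

section Run

variable {k b : ℕ} {x : ℝ} {st : List (ℕ × ℝ)} {L : List ℝ}

lemma getD_ffUpdate : (ffUpdate k x st).getD b (0, 0) =
    if ffFind k x st = b then ((st.getD b (0, 0)).1 + 1, (st.getD b (0, 0)).2 + x)
    else st.getD b (0, 0) := by
  induction st generalizing b with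
  | nil => cases b <;> simp [ffUpdate, ffFind]
  | cons c st ih =>
    by_cases hc : c.1 < k ∧ c.2 + x ≤ 1
    · rw [ffUpdate, ffFind, if_pos hc, if_pos hc]
      cases b <;> simp
    · rw [ffUpdate, ffFind, if_neg hc, if_neg hc]
      cases b with
      | zero => simp
      | succ b => simpa using ih

lemma le_or_one_lt_of_lt_ffFind (hb : b < ffFind k x st) :
    k ≤ (st.getD b (0, 0)).1 ∨ 1 < (st.getD b (0, 0)).2 + x := by
  induction st generalizing b with
  | nil => simp [ffFind] at hb
  | cons c st ih =>
    unfold ffFind at hb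
    split_ifs at hb with hc
    · exact absurd hb (Nat.not_lt_zero _)
    cases b with
    | zero => simpa [imp_iff_not_or] using hc
    | succ b => simpa using ih (Nat.lt_of_succ_lt_succ hb)

lemma pos_of_mem_ffUpdate (hst : ∀ c ∈ st, 0 < c.1) : ∀ c ∈ ffUpdate k x st, 0 < c.1 := by
  induction st with
  | nil => simp [ffUpdate]
  | cons c st ih =>
    rw [List.forall_mem_cons] at hst
    unfold ffUpdate
    split_ifs
    · exact List.forall_mem_cons.2 ⟨Nat.succ_pos _, hst.2⟩
    · exact List.forall_mem_cons.2 ⟨hst.1, ih hst.2⟩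

lemma ffState_append_singleton : ffState k (L ++ [x]) = ffUpdate k x (ffState k L) :=
  List.foldl_append

lemma pos_of_mem_ffState : ∀ c ∈ ffState k L, 0 < c.1 := by
  induction L using List.reverseRecOn with
  | nil => simp [ffState]
  | append_singleton L x ih =>
    rw [ffState_append_singleton]
    exact pos_of_mem_ffUpdate ih

/-- The indices of the first `n` items of `L`. -/
def firstItems (L : List ℝ) (n : ℕ) : Finset (Fin L.length) := {i | i.1 < n}

lemma firstItems_length : firstItems L L.length = Finset.univ :=
  Finset.filter_true_of_mem fun i _ => i.2

lemma firstItems_succ {n : ℕ} (hn : n < L.length) :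
    firstItems L (n + 1) = insert ⟨n, hn⟩ (firstItems L n) := by
  ext i
  simp only [firstItems, Finset.mem_filter_univ, Finset.mem_insert, Fin.ext_iff]
  omega

lemma getD_ffState_take {n : ℕ} (hn : n ≤ L.length) :
    (ffState k (L.take n)).getD b (0, 0) =
      ((content (firstItems L n) (ffAssign k L) b).card,
        load (firstItems L n) L.get (ffAssign k L) b) := by
  induction n with
  | zero => simp [ffState, content, load, firstItems]
  | succ n ih =>
    have hnot : (⟨n, hn⟩ : Fin L.length) ∉ firstItems L n := by simp [firstItems]
    have hassign : ffAssign k L ⟨n, hn⟩ = ffFind k L[n] (ffState k (L.take n)) := rfl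
    rw [List.take_succ_eq_append_getElem hn, ffState_append_singleton, getD_ffUpdate,
      ih (Nat.le_of_succ_le hn), firstItems_succ hn, load, load, content_insert, hassign]
    split_ifs
    · have hnot' : (⟨n, hn⟩ : Fin L.length) ∉ content (firstItems L n) (ffAssign k L) b :=
        fun h => hnot (content_subset h)
      rw [Finset.card_insert_of_notMem hnot', Finset.sum_insert hnot', add_comm (L.get _)]
      rfl
    · rfl

lemma getD_ffState : (ffState k L).getD b (0, 0) =
    ((content Finset.univ (ffAssign k L) b).card, load Finset.univ L.get (ffAssign k L) b) := by
  simpa only [List.take_length, firstItems_length] using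
    getD_ffState_take (k := k) (b := b) (le_refl L.length)

lemma bins_ffAssign : bins Finset.univ (ffAssign k L) = Finset.range (FF k L) := by
  ext b
  have hcard : ((ffState k L).getD b (0, 0)).1 = (content Finset.univ (ffAssign k L) b).card :=
    congrArg Prod.fst getD_ffState
  rw [Finset.mem_range, FF]
  constructor
  · intro hb
    by_contra! hle
    rw [List.getD_eq_default _ _ hle] at hcard
    exact (Finset.card_pos.2 (content_nonempty hb)).ne hcard
  · intro hlt
    rw [List.getD_eq_getElem _ _ hlt] at hcard
    have hpos := pos_of_mem_ffState _ (List.getElem_mem hlt)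
    rw [hcard] at hpos
    obtain ⟨i, hi⟩ := Finset.card_pos.1 hpos
    exact mem_bins.2 ⟨i, Finset.mem_univ i, (mem_content.1 hi).2⟩

lemma le_or_one_lt_of_lt_ffAssign (hL : ValidInput L) {i : Fin L.length}
    (hlt : b < ffAssign k L i) :
    k ≤ (content Finset.univ (ffAssign k L) b).card ∨
      1 < load Finset.univ L.get (ffAssign k L) b + L.get i := by
  have hsub := Finset.subset_univ (firstItems L i)
  have hskip := le_or_one_lt_of_lt_ffFind hlt
  rw [getD_ffState_take i.2.le] at hskip
  refine hskip.imp (fun h => h.trans (Finset.card_le_card (content_mono hsub))) fun h => ?_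
  have hmono := load_mono (p := ffAssign k L) (b := b)
    (fun j _ => (hL _ (L.get_mem j)).1.le) hsub
  linarith

end Run

lemma binsUsed_eq_card_bins {L : List ℝ} (f : Fin L.length → ℕ) :
    binsUsed L f = (bins Finset.univ f).card := by
  unfold binsUsed bins
  congr!

lemma isFeasible_iff {k : ℕ} {L : List ℝ} {f : Fin L.length → ℕ} :
    IsFeasible k L f ↔
      (∀ b, (content Finset.univ f b).card ≤ k) ∧ IsPacking Finset.univ L.get f := by
  rw [IsPacking, ← forall_and]
  unfold IsFeasible load content
  congr!

lemma exists_isFeasible {k : ℕ} (hk : 1 ≤ k) {L : List ℝ} (hL : ValidInput L) :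
    ∃ f, IsFeasible k L f := by
  have hcard (b : ℕ) : (content Finset.univ (Fin.val (n := L.length)) b).card ≤ 1 :=
    Finset.card_le_one.2 fun i hi j hj =>
      Fin.ext ((mem_content.1 hi).2.trans (mem_content.1 hj).2.symm)
  refine ⟨Fin.val, isFeasible_iff.2 ⟨fun b => (hcard b).trans hk, fun b => ?_⟩⟩
  calc load Finset.univ L.get Fin.val b
      ≤ (content Finset.univ (Fin.val (n := L.length)) b).card • (1 : ℝ) :=
        Finset.sum_le_card_nsmul _ _ _ fun i _ => (hL _ (L.get_mem i)).2
    _ ≤ 1 := by simpa using hcard b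

lemma exists_isFeasible_binsUsed_eq_OPT {k : ℕ} (hk : 1 ≤ k) {L : List ℝ} (hL : ValidInput L) :
    ∃ f, IsFeasible k L f ∧ binsUsed L f = OPT k L :=
  let ⟨f, hf⟩ := exists_isFeasible hk hL
  Nat.sInf_mem (s := {n | ∃ f, IsFeasible k L f ∧ binsUsed L f = n}) ⟨_, f, hf, rfl⟩

lemma ten_mul_mul_FF_add_le {k : ℕ} (hk : 2 ≤ k) {L : List ℝ} (hL : ValidInput L) :
    10 * k * FF k L + 24 * OPT k L ≤ 27 * k * OPT k L := by
  obtain ⟨f, hf, hopt⟩ := exists_isFeasible_binsUsed_eq_OPT (one_le_two.trans hk) hL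
  obtain ⟨hcard, hload⟩ := isFeasible_iff.1 hf
  have hbound := ten_mul_mul_card_bins_add_le hk (fun i _ => (hL _ (L.get_mem i)).1)
    (fun i _ b _ hlt => le_or_one_lt_of_lt_ffAssign hL hlt) hload hcard
  rwa [← binsUsed_eq_card_bins f, hopt, bins_ffAssign, Finset.card_range] at hbound

end BinPacking

/-- For every k ≥ 2 and every input `L`, FF(L) ≤ (2.7 − 2.4/k)·OPT(L):
the absolute competitive ratio of First Fit is at most 2.7 − 2.4/k. -/
theorem ff_absolute_ub (k : ℕ) (hk : 2 ≤ k) (L : List ℝ) (hL : ValidInput L) :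
    (FF k L : ℝ) ≤ ((2.7 : ℝ) - 2.4 / k) * (OPT k L : ℝ) := by
  have hbound : 10 * (k : ℝ) * FF k L + 24 * OPT k L ≤ 27 * k * OPT k L := by
    exact_mod_cast BinPacking.ten_mul_mul_FF_add_le hk hL
  have hk0 : (0 : ℝ) < k := by positivity
  have hratio : ((2.7 : ℝ) - 2.4 / k) * OPT k L = (2.7 * k * OPT k L - 2.4 * OPT k L) / k := by
    field_simp
  rw [hratio, le_div_iff₀ hk0]
  linarith
end
end

section
/- For k = 3 and every input list L, First Fit with cardinality constraint k satisfies FF(L) ≤ (11/6)·OPT(L). That is, the absolute competitive ratio of First Fit for k = 3 is at most 11/6. -/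
/-!
Distribute weight over the items so that every First Fit bin carries weight at least `1`, and show
that the bins of an arbitrary feasible packing carry weight at most `11/6` on average.

An item alone in its First Fit bin (a *single*) has weight `1`. A First Fit bin with exactly two
items splits its weight as `2/3 + 1/3` if one of them is larger than `1/2`, and as `1/2 + 1/2`
otherwise. Every other item has weight `1/3`. First Fit guarantees that a bin with at most two items
and any item of a later bin have total size more than `1`. Hence two singles never fit together, so
at most one single `z` has size at most `1/2`.

A feasible bin of weight more than `5/3` consists of a single `p` and two other items. If `p` is
larger than `1/2`, its companions cannot both have weight `1/2`, so the bin has weight at most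
`1 + 1/2 + 1/3 = 11/6`. The bin of `z` has weight at most `2`, and if it exceeds `11/6`, then the
First Fit partner of one of the companions of `z` lies in another bin, of weight at most `5/3`.
These two bins carry at most `11/3` together.
-/

open scoped Classical
noncomputable section

open Finset

lemma sum_le_card_nsmul_of_add_le {β M : Type*} [AddCommMonoid M] [PartialOrder M]
    [IsOrderedAddMonoid M] {S : Finset β} {u : β → M} {c : M} {a b : β} (ha : a ∈ S) (hb : b ∈ S)
    (hab : a ≠ b) (hadd : u a + u b ≤ c + c) (h : ∀ x ∈ S, x ≠ a → x ≠ b → u x ≤ c) :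
    ∑ x ∈ S, u x ≤ #S • c := by
  have hb' : b ∈ S.erase a := mem_erase.2 ⟨hab.symm, hb⟩
  have hrest : ∑ x ∈ (S.erase a).erase b, u x ≤ ∑ _x ∈ (S.erase a).erase b, c :=
    sum_le_sum fun x hx => by
      obtain ⟨hxb, hxa, hxS⟩ := by simpa only [mem_erase] using hx
      exact h x hxS hxa hxb
  calc ∑ x ∈ S, u x = u a + u b + ∑ x ∈ (S.erase a).erase b, u x := by
        rw [← add_sum_erase S u ha, ← add_sum_erase _ u hb', add_assoc]
    _ ≤ c + c + ∑ _x ∈ (S.erase a).erase b, c := add_le_add hadd hrest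
    _ = #S • c := by
        rw [add_assoc, add_sum_erase _ (fun _ => c) hb', add_sum_erase S (fun _ => c) ha,
          sum_const]

section Packing

variable {ι : Type*}

/-- The set `B` of items may share a bin under the cardinality constraint `k`. -/
def FeasibleBin (k : ℕ) (s : ι → ℝ) (B : Finset ι) : Prop :=
  #B ≤ k ∧ ∑ i ∈ B, s i ≤ 1

lemma FeasibleBin.add_le_one {k : ℕ} {s : ι → ℝ} {B : Finset ι} {i j : ι}
    (hB : FeasibleBin k s B) (hs : ∀ i, 0 ≤ s i) (hi : i ∈ B) (hj : j ∈ B) (hij : i ≠ j) :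
    s i + s j ≤ 1 :=
  (add_le_sum (fun l _ => hs l) hi hj hij).trans hB.2

variable [Fintype ι] {k : ℕ} {s : ι → ℝ} {f g : ι → ℕ} {i j t : ι}

/-- The items that the assignment `g` puts into bin `b`. -/
def bin (g : ι → ℕ) (b : ℕ) : Finset ι := univ.filter (fun i => g i = b)

lemma mem_bin {b : ℕ} : i ∈ bin g b ↔ g i = b := by simp only [bin, mem_filter_univ]

lemma sum_image_sum_bin (g : ι → ℕ) (u : ι → ℝ) :
    ∑ b ∈ univ.image g, ∑ i ∈ bin g b, u i = ∑ i, u i :=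
  sum_fiberwise_of_maps_to (fun i _ => mem_image_of_mem g (mem_univ i)) u

/-- The consequence of the First Fit rule on which the weight argument rests: no item fits into an
earlier bin that ends up with fewer than `k` items, even at the final level of that bin. The bins
of `g` are not required to be feasible, so the property becomes weaker as `k` decreases. -/
structure IsFirstFit (k : ℕ) (s : ι → ℝ) (g : ι → ℕ) : Prop where
  size_nonneg : ∀ i, 0 ≤ s i
  one_lt_level_add : ∀ t b, b < g t → #(bin g b) < k → 1 < ∑ i ∈ bin g b, s i + s t

lemma IsFirstFit.mono {m : ℕ} (H : IsFirstFit k s g) (hmk : m ≤ k) : IsFirstFit m s g where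
  size_nonneg := H.size_nonneg
  one_lt_level_add t b hb hc := H.one_lt_level_add t b hb (hc.trans_le hmk)

/-- The item `i` is alone in its bin. -/
def Single (g : ι → ℕ) (i : ι) : Prop := bin g (g i) = {i}

/-- The distinct items `i` and `j` together form a complete bin. -/
structure Paired (g : ι → ℕ) (i j : ι) : Prop where
  ne : i ≠ j
  bin_eq : bin g (g i) = {i, j}

lemma Single.eq_of_apply_eq (hi : Single g i) (h : g j = g i) : j = i :=
  mem_singleton.1 (hi ▸ mem_bin.2 h)

lemma Paired.eq_or_eq_of_apply_eq (h : Paired g i j) (ht : g t = g i) : t = i ∨ t = j := by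
  simpa only [h.bin_eq, mem_insert, mem_singleton] using mem_bin.2 ht

lemma Paired.apply_eq (h : Paired g i j) : g j = g i :=
  mem_bin.1 (h.bin_eq ▸ mem_insert_of_mem (mem_singleton_self j))

lemma Paired.symm (h : Paired g i j) : Paired g j i :=
  ⟨h.ne.symm, by rw [h.apply_eq, h.bin_eq, pair_comm]⟩

lemma Paired.not_single (h : Paired g i j) : ¬ Single g i :=
  fun hi => h.ne (hi.eq_of_apply_eq h.apply_eq).symm

lemma Paired.right_unique (h : Paired g i j) (ht : Paired g i t) : t = j :=
  (h.eq_or_eq_of_apply_eq ht.apply_eq).resolve_left ht.ne.symm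

lemma single_or_paired_or_two_lt_card_bin (g : ι → ℕ) (i : ι) :
    Single g i ∨ (∃ j, Paired g i j) ∨ 2 < #(bin g (g i)) := by
  have hi : i ∈ bin g (g i) := mem_bin.2 rfl
  have hcard := card_erase_add_one hi
  obtain h | h | h : #((bin g (g i)).erase i) = 0 ∨ #((bin g (g i)).erase i) = 1 ∨
      2 ≤ #((bin g (g i)).erase i) := by omega
  · exact .inl (by rw [Single, ← insert_erase hi, card_eq_zero.1 h, insert_empty_eq])
  · obtain ⟨j, hj⟩ := card_eq_one.1 h
    have hne : j ≠ i := ne_of_mem_erase (hj ▸ mem_singleton_self j)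
    exact .inr (.inl ⟨j, hne.symm, by rw [← hj, insert_erase hi]⟩)
  · exact .inr (.inr (by omega))

lemma Single.one_lt_add_of_lt (hi : Single g i) (H : IsFirstFit k s g) (h : g i < g t)
    (hk : 1 < k := by norm_num) : 1 < s i + s t := by
  have hlevel := H.one_lt_level_add t (g i) h (by rwa [hi, card_singleton])
  rwa [hi, sum_singleton] at hlevel

lemma Single.one_lt_add (hi : Single g i) (hj : Single g j) (H : IsFirstFit k s g) (hij : i ≠ j)
    (hk : 1 < k := by norm_num) : 1 < s i + s j := by
  rcases lt_trichotomy (g i) (g j) with h | h | h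
  · exact hi.one_lt_add_of_lt H h hk
  · exact absurd (hj.eq_of_apply_eq h) hij
  · exact add_comm (s i) (s j) ▸ hj.one_lt_add_of_lt H h hk

lemma Paired.one_lt_add_of_lt (hij : Paired g i j) (H : IsFirstFit k s g) (h : g i < g t)
    (hk : 2 < k := by norm_num) : 1 < s i + s j + s t := by
  have hlevel := H.one_lt_level_add t (g i) h (by rwa [hij.bin_eq, card_pair hij.ne])
  rwa [hij.bin_eq, sum_pair hij.ne] at hlevel

lemma Paired.one_lt_add_single (hij : Paired g i j) (ht : Single g t) (H : IsFirstFit k s g)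
    (hk : 2 < k := by norm_num) : 1 < s i + s j + s t := by
  rcases lt_trichotomy (g i) (g t) with h | h | h
  · exact hij.one_lt_add_of_lt H h hk
  · exact absurd (ht.eq_of_apply_eq h ▸ ht) hij.not_single
  · linarith [ht.one_lt_add_of_lt H h (by omega), H.size_nonneg j]

end Packing

section Weight

variable {ι : Type*} [Fintype ι] {s : ι → ℝ} {f g : ι → ℕ} {i j : ι}

/-- The items `i` and `j` form a complete bin in which `i` is larger than `1/2`. -/
structure DominantPair (s : ι → ℝ) (g : ι → ℕ) (i j : ι) : Prop extends Paired g i j where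
  half_lt : 1 / 2 < s i

/-- The items `i` and `j` form a complete bin and neither is larger than `1/2`. -/
structure BalancedPair (s : ι → ℝ) (g : ι → ℕ) (i j : ι) : Prop extends Paired g i j where
  left_le : s i ≤ 1 / 2
  right_le : s j ≤ 1 / 2

lemma BalancedPair.symm (h : BalancedPair s g i j) : BalancedPair s g j i :=
  ⟨h.toPaired.symm, h.right_le, h.left_le⟩

/-- The weight of an item with respect to the packing `g`, chosen so that every bin of `g` has
weight at least `1`. -/
def weight (s : ι → ℝ) (g : ι → ℕ) (i : ι) : ℝ :=
  if Single g i then 1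
  else if ∃ j, DominantPair s g i j then 2 / 3
  else if ∃ j, BalancedPair s g i j then 1 / 2
  else 1 / 3

lemma Single.weight_eq (h : Single g i) : weight s g i = 1 := if_pos h

lemma DominantPair.weight_eq (h : DominantPair s g i j) : weight s g i = 2 / 3 := by
  rw [weight, if_neg h.not_single, if_pos ⟨j, h⟩]

lemma BalancedPair.weight_eq (h : BalancedPair s g i j) : weight s g i = 1 / 2 := by
  rw [weight, if_neg h.not_single, if_neg (fun ⟨_, hd⟩ => hd.half_lt.not_ge h.left_le),
    if_pos ⟨j, h⟩]

lemma weight_cases (s : ι → ℝ) (hi : ¬ Single g i) :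
    (∃ j, DominantPair s g i j) ∨ (∃ j, BalancedPair s g i j) ∨ weight s g i = 1 / 3 := by
  rw [weight, if_neg hi]
  split_ifs with hd hb
  exacts [.inl hd, .inr (.inl hb), .inr (.inr rfl)]

lemma one_third_le_weight (s : ι → ℝ) (g : ι → ℕ) (i : ι) : 1 / 3 ≤ weight s g i := by
  unfold weight
  split_ifs <;> norm_num

lemma weight_le_two_thirds (s : ι → ℝ) (hi : ¬ Single g i) : weight s g i ≤ 2 / 3 := by
  rcases weight_cases s hi with ⟨j, h⟩ | ⟨j, h⟩ | h
  · exact h.weight_eq.le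
  · linarith [h.weight_eq]
  · linarith

lemma weight_le_half (hi : ¬ Single g i) (hs : s i ≤ 1 / 2) : weight s g i ≤ 1 / 2 := by
  rcases weight_cases s hi with ⟨j, h⟩ | ⟨j, h⟩ | h
  · exact absurd h.half_lt hs.not_gt
  · exact h.weight_eq.le
  · linarith

lemma one_le_sum_weight_bin (s : ι → ℝ) (g : ι → ℕ) (i : ι) :
    1 ≤ ∑ j ∈ bin g (g i), weight s g j := by
  rcases single_or_paired_or_two_lt_card_bin g i with h | ⟨j, h⟩ | h
  · rw [h, sum_singleton, h.weight_eq]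
  · rw [h.bin_eq, sum_pair h.ne]
    rcases lt_or_ge (1 / 2) (s i) with hi | hi
    · linarith [DominantPair.weight_eq ⟨h, hi⟩, one_third_le_weight s g j]
    rcases lt_or_ge (1 / 2) (s j) with hj | hj
    · linarith [DominantPair.weight_eq ⟨h.symm, hj⟩, one_third_le_weight s g i]
    have hb : BalancedPair s g i j := ⟨h, hi, hj⟩
    linarith [hb.weight_eq, hb.symm.weight_eq]
  · have hsum := card_nsmul_le_sum (bin g (g i)) _ _ fun j _ => one_third_le_weight s g j
    rw [nsmul_eq_mul] at hsum
    have hcard : (3 : ℝ) ≤ #(bin g (g i)) := by exact_mod_cast h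
    linarith

lemma card_image_le_sum_weight (s : ι → ℝ) (g : ι → ℕ) :
    (#(univ.image g) : ℝ) ≤ ∑ i, weight s g i := by
  rw [← sum_image_sum_bin g, ← nsmul_one]
  refine card_nsmul_le_sum _ _ _ fun b hb => ?_
  obtain ⟨i, -, rfl⟩ := mem_image.1 hb
  exact one_le_sum_weight_bin s g i

variable {B : Finset ι} {p q r x y : ι}

/-- `B` is a bin `{p, q, r}` of total size at most `1` in which `p` is the only single of `g`. These
are the only feasible bins whose weight can exceed `5/3`. -/
structure SingleTriple (s : ι → ℝ) (g : ι → ℕ) (B : Finset ι) (p q r : ι) : Prop where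
  eq : B = {p, q, r}
  ne : q ≠ r
  single : Single g p
  not_single_left : ¬ Single g q
  not_single_right : ¬ Single g r
  size_le : s p + s q + s r ≤ 1

lemma FeasibleBin.sum_weight_le_of_forall_not_single (hB : FeasibleBin 3 s B)
    (hs : ∀ i, 0 ≤ s i) (h : ∀ i ∈ B, ¬ Single g i) : ∑ i ∈ B, weight s g i ≤ 5 / 3 := by
  have hcard : (#B : ℝ) ≤ 3 := by exact_mod_cast hB.1
  by_cases hlarge : ∃ x ∈ B, 1 / 2 < s x
  · obtain ⟨x, hx, hxs⟩ := hlarge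
    have hrest : ∑ i ∈ B.erase x, weight s g i ≤ #(B.erase x) • (1 / 2 : ℝ) :=
      sum_le_card_nsmul _ _ _ fun y hy => weight_le_half (h y (mem_of_mem_erase hy)) (by
        linarith [hB.add_le_one hs hx (mem_of_mem_erase hy) (ne_of_mem_erase hy).symm])
    rw [nsmul_eq_mul, cast_card_erase_of_mem hx] at hrest
    linarith [add_sum_erase B (weight s g) hx, weight_le_two_thirds s (h x hx)]
  · push Not at hlarge
    have hsum := sum_le_card_nsmul B _ _ fun i hi => weight_le_half (h i hi) (hlarge i hi)
    rw [nsmul_eq_mul] at hsum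
    linarith

lemma FeasibleBin.sum_weight_le_or_singleTriple (hB : FeasibleBin 3 s B) (H : IsFirstFit 3 s g) :
    ∑ i ∈ B, weight s g i ≤ 5 / 3 ∨ ∃ p q r, SingleTriple s g B p q r := by
  by_cases hsingle : ∃ p ∈ B, Single g p
  swap
  · push Not at hsingle
    exact .inl (hB.sum_weight_le_of_forall_not_single H.size_nonneg hsingle)
  obtain ⟨p, hpB, hp⟩ := hsingle
  have hrest : ∀ i ∈ B.erase p, ¬ Single g i := fun i hi hsi => by
    linarith [hp.one_lt_add hsi H (ne_of_mem_erase hi).symm,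
      hB.add_le_one H.size_nonneg hpB (mem_of_mem_erase hi) (ne_of_mem_erase hi).symm]
  obtain hcard | hcard : #(B.erase p) ≤ 1 ∨ #(B.erase p) = 2 := by
    have := hB.1
    have := card_erase_add_one hpB
    omega
  · have hsum := sum_le_card_nsmul _ _ _ fun i hi => weight_le_two_thirds s (hrest i hi)
    have hcard' : (#(B.erase p) : ℝ) ≤ 1 := by exact_mod_cast hcard
    rw [nsmul_eq_mul] at hsum
    left
    linarith [add_sum_erase B (weight s g) hpB, hp.weight_eq (s := s)]
  · obtain ⟨q, r, hqr, heq⟩ := card_eq_two.1 hcard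
    have hle := hB.2
    rw [← add_sum_erase B s hpB, heq, sum_pair hqr, ← add_assoc] at hle
    exact .inr ⟨p, q, r, by rw [← heq, insert_erase hpB], hqr, hp,
      hrest q (by simp [heq]), hrest r (by simp [heq]), hle⟩

namespace SingleTriple

lemma symm (T : SingleTriple s g B p q r) : SingleTriple s g B p r q :=
  ⟨by rw [T.eq, pair_comm], T.ne.symm, T.single, T.not_single_right, T.not_single_left,
    by linarith [T.size_le]⟩

lemma mem_iff (T : SingleTriple s g B p q r) : x ∈ B ↔ x = p ∨ x = q ∨ x = r := by
  simp only [T.eq, mem_insert, mem_singleton]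

lemma single_mem (T : SingleTriple s g B p q r) : p ∈ B := T.mem_iff.2 (.inl rfl)

lemma sum_weight_eq (T : SingleTriple s g B p q r) :
    ∑ i ∈ B, weight s g i = 1 + (weight s g q + weight s g r) := by
  have hp : p ∉ ({q, r} : Finset ι) := by
    rw [mem_insert, mem_singleton]
    rintro (rfl | rfl)
    exacts [T.not_single_left T.single, T.not_single_right T.single]
  rw [T.eq, sum_insert hp, sum_pair T.ne, T.single.weight_eq]

lemma apply_ne_of_paired (T : SingleTriple s g B p q r) (H : IsFirstFit 3 s g)
    (hq : Paired g q x) : g q ≠ g r := fun h => by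
  rcases hq.eq_or_eq_of_apply_eq h.symm with rfl | rfl
  · exact T.ne rfl
  · linarith [hq.one_lt_add_single T.single H, T.size_le]

lemma partner_notMem (T : SingleTriple s g B p q r) (H : IsFirstFit 3 s g)
    (hq : Paired g q x) : x ∉ B := fun hx => by
  rcases T.mem_iff.1 hx with rfl | rfl | rfl
  · exact hq.symm.not_single T.single
  · exact hq.ne rfl
  · exact T.apply_ne_of_paired H hq hq.apply_eq.symm

lemma single_notMem_bin {b c : ℕ} (T : SingleTriple s g (bin f b) p q r) (hcb : c ≠ b) :
    p ∉ bin f c := fun hp =>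
  hcb ((mem_bin.1 hp).symm.trans (mem_bin.1 T.single_mem))

lemma apply_partner_ne {b : ℕ} (T : SingleTriple s g (bin f b) p q r) (H : IsFirstFit 3 s g)
    (hq : Paired g q x) : f x ≠ b :=
  mt mem_bin.2 (T.partner_notMem H hq)

lemma not_dominantPair_of_balancedPair (T : SingleTriple s g B p q r) (H : IsFirstFit 3 s g)
    (hq : BalancedPair s g q x) : ¬ DominantPair s g r y := fun hr => by
  linarith [hq.one_lt_add_single T.single H, T.size_le, hq.right_le, hr.half_lt]

lemma weight_add_weight_le_one (T : SingleTriple s g B p q r) (H : IsFirstFit 3 s g) :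
    weight s g q + weight s g r ≤ 1 := by
  rcases weight_cases s T.not_single_left with ⟨x, hq⟩ | ⟨x, hq⟩ | hq
  · rcases weight_cases s T.not_single_right with ⟨y, hr⟩ | ⟨y, hr⟩ | hr
    · linarith [T.size_le, hq.half_lt, hr.half_lt, H.size_nonneg p]
    · exact absurd hq (T.symm.not_dominantPair_of_balancedPair H hr)
    · linarith [hq.weight_eq]
  · have hr : weight s g r ≤ 1 / 2 := by
      rcases weight_cases s T.not_single_right with ⟨y, hr⟩ | ⟨y, hr⟩ | hr
      · exact absurd hr (T.not_dominantPair_of_balancedPair H hq)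
      · exact hr.weight_eq.le
      · linarith
    linarith [hq.weight_eq]
  · linarith [weight_le_two_thirds s T.not_single_right]

/-- Two such items come from different bins of `g`; as the partner of the earlier one is at most
`1/2`, they would have total size more than `1/2`. -/
lemma not_balancedPair_of_half_lt (T : SingleTriple s g B p q r) (H : IsFirstFit 3 s g)
    (hp : 1 / 2 < s p) (hq : BalancedPair s g q x) : ¬ BalancedPair s g r y := fun hr => by
  rcases (T.apply_ne_of_paired H hq.toPaired).lt_or_gt with h | h
  · linarith [hq.one_lt_add_of_lt H h, T.size_le, hq.right_le]
  · linarith [hr.one_lt_add_of_lt H h, T.size_le, hr.right_le]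

lemma sum_weight_le_of_half_lt (T : SingleTriple s g B p q r) (H : IsFirstFit 3 s g)
    (hp : 1 / 2 < s p) : ∑ i ∈ B, weight s g i ≤ 11 / 6 := by
  have hq_nonneg := H.size_nonneg q
  have hr_nonneg := H.size_nonneg r
  have hq_le := weight_le_half (s := s) T.not_single_left (by linarith [T.size_le])
  have hr_le := weight_le_half (s := s) T.not_single_right (by linarith [T.size_le])
  rw [T.sum_weight_eq]
  rcases weight_cases s T.not_single_left with ⟨x, hq⟩ | ⟨x, hq⟩ | hq
  · linarith [hq.half_lt, T.size_le]
  · rcases weight_cases s T.not_single_right with ⟨y, hr⟩ | ⟨y, hr⟩ | hr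
    · linarith [hr.half_lt, T.size_le]
    · exact absurd hr (T.not_balancedPair_of_half_lt H hp hq)
    · linarith
  · linarith

end SingleTriple

lemma FeasibleBin.sum_weight_le_or_singleTriple_of_mem (hB : FeasibleBin 3 s B)
    (H : IsFirstFit 3 s g) (hx : x ∈ B) (hx_single : ¬ Single g x) :
    ∑ i ∈ B, weight s g i ≤ 5 / 3 ∨ ∃ p y, SingleTriple s g B p x y := by
  refine (hB.sum_weight_le_or_singleTriple H).imp_right fun ⟨p, q, r, T⟩ => ?_
  rcases T.mem_iff.1 hx with rfl | rfl | rfl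
  · exact absurd T.single hx_single
  · exact ⟨p, r, T⟩
  · exact ⟨p, q, T.symm⟩

lemma FeasibleBin.exists_singleTriple_of_lt_sum_weight (hB : FeasibleBin 3 s B)
    (H : IsFirstFit 3 s g) (hw : 11 / 6 < ∑ i ∈ B, weight s g i) :
    ∃ p q r, SingleTriple s g B p q r ∧ s p ≤ 1 / 2 := by
  obtain h | ⟨p, q, r, T⟩ := hB.sum_weight_le_or_singleTriple H
  · linarith
  · exact ⟨p, q, r, T, not_lt.1 fun hp => hw.not_ge (T.sum_weight_le_of_half_lt H hp)⟩

namespace SingleTriple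

variable {C : Finset ι} {z : ι}

/-- As `q + x + r > 1`, the partner `x` of `q` is larger than `z`, so no single fits beside it. -/
lemma sum_weight_partner_le_of_lt (T : SingleTriple s g B z q r) (H : IsFirstFit 3 s g)
    (hq : Paired g q x) (hqr : g q < g r) (hC : FeasibleBin 3 s C) (hxC : x ∈ C) (hzC : z ∉ C) :
    ∑ i ∈ C, weight s g i ≤ 5 / 3 := by
  obtain h | ⟨p, y, T'⟩ := hC.sum_weight_le_or_singleTriple_of_mem H hxC hq.symm.not_single
  · exact h
  have hpz : 1 < s p + s z :=
    T'.single.one_lt_add T.single H (ne_of_mem_of_not_mem T'.single_mem hzC)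
  linarith [hq.one_lt_add_of_lt H hqr, T.size_le, T'.size_le, H.size_nonneg y]

lemma not_balancedPair_beside_partner (T : SingleTriple s g B z q r) (H : IsFirstFit 3 s g)
    (hq : DominantPair s g q x) (T' : SingleTriple s g C p x y) (hp : 1 / 2 < s p)
    (hpz : 1 < s p + s z) (t : ι) : ¬ BalancedPair s g y t := fun hy => by
  rcases lt_trichotomy (g y) (g q) with hlt | heq | hlt
  · linarith [hy.one_lt_add_of_lt H (hlt.trans_eq hq.apply_eq.symm), hy.right_le, T'.size_le]
  · rcases hq.eq_or_eq_of_apply_eq heq with rfl | rfl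
    · exact hq.half_lt.not_ge hy.left_le
    · exact T'.ne rfl
  -- `q + x + y > 1` and `p + z > 1`, but the two triples have total size at most `2`.
  · linarith [hq.one_lt_add_of_lt H hlt, T.size_le, T'.size_le, H.size_nonneg r]

lemma sum_weight_partner_le_of_dominantPair (T : SingleTriple s g B z q r) (H : IsFirstFit 3 s g)
    (hz : s z ≤ 1 / 2) (hq : DominantPair s g q x) (hC : FeasibleBin 3 s C) (hxC : x ∈ C)
    (hzC : z ∉ C) : ∑ i ∈ C, weight s g i ≤ 5 / 3 := by
  obtain h | ⟨p, y, T'⟩ := hC.sum_weight_le_or_singleTriple_of_mem H hxC hq.symm.not_single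
  · exact h
  have hpz : 1 < s p + s z :=
    T'.single.one_lt_add T.single H (ne_of_mem_of_not_mem T'.single_mem hzC)
  have hp : 1 / 2 < s p := by linarith
  have hx_nonneg := H.size_nonneg x
  have hy_nonneg := H.size_nonneg y
  have hx : weight s g x = 1 / 3 := by
    rcases weight_cases s T'.not_single_left with ⟨t, hx⟩ | ⟨t, hx⟩ | hx
    · linarith [hx.half_lt, T'.size_le]
    · exact absurd hx.right_le (hq.symm.right_unique hx.toPaired ▸ hq.half_lt.not_ge)
    · exact hx
  have hy : weight s g y = 1 / 3 := by
    rcases weight_cases s T'.not_single_right with ⟨t, hy⟩ | ⟨t, hy⟩ | hy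
    · linarith [hy.half_lt, T'.size_le]
    · exact absurd hy (T.not_balancedPair_beside_partner H hq T' hp hpz t)
    · exact hy
  rw [T'.sum_weight_eq]
  linarith

lemma exists_light_bin {b : ℕ} (T : SingleTriple s g (bin f b) z q r) (H : IsFirstFit 3 s g)
    (hf : ∀ b, FeasibleBin 3 s (bin f b)) (hz : s z ≤ 1 / 2)
    (hw : 11 / 6 < ∑ i ∈ bin f b, weight s g i) :
    ∃ x, f x ≠ b ∧ ∑ i ∈ bin f (f x), weight s g i ≤ 5 / 3 := by
  have of_dominantPair {q r x} (T : SingleTriple s g (bin f b) z q r)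
      (hq : DominantPair s g q x) : ∃ x, f x ≠ b ∧ ∑ i ∈ bin f (f x), weight s g i ≤ 5 / 3 :=
    have hx := T.apply_partner_ne H hq.toPaired
    ⟨x, hx, T.sum_weight_partner_le_of_dominantPair H hz hq (hf _) (mem_bin.2 rfl)
      (T.single_notMem_bin hx)⟩
  have of_lt {q r x} (T : SingleTriple s g (bin f b) z q r) (hq : Paired g q x)
      (hqr : g q < g r) : ∃ x, f x ≠ b ∧ ∑ i ∈ bin f (f x), weight s g i ≤ 5 / 3 :=
    have hx := T.apply_partner_ne H hq
    ⟨x, hx, T.sum_weight_partner_le_of_lt H hq hqr (hf _) (mem_bin.2 rfl)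
      (T.single_notMem_bin hx)⟩
  rw [T.sum_weight_eq] at hw
  rcases weight_cases s T.not_single_left with ⟨x, hq⟩ | hq
  · exact of_dominantPair T hq
  rcases weight_cases s T.not_single_right with ⟨y, hr⟩ | hr
  · exact of_dominantPair T.symm hr
  rcases hq with ⟨x, hq⟩ | hq <;> rcases hr with ⟨y, hr⟩ | hr
  · rcases (T.apply_ne_of_paired H hq.toPaired).lt_or_gt with h | h
    · exact of_lt T hq.toPaired h
    · exact of_lt T.symm hr.toPaired h
  · linarith [hq.weight_eq]
  · linarith [hr.weight_eq]
  · linarith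

end SingleTriple

lemma sum_weight_le (H : IsFirstFit 3 s g) (hf : ∀ b, FeasibleBin 3 s (bin f b)) :
    ∑ i, weight s g i ≤ #(univ.image f) * (11 / 6) := by
  rw [← nsmul_eq_mul, ← sum_image_sum_bin f]
  by_cases hall : ∀ b ∈ univ.image f, ∑ i ∈ bin f b, weight s g i ≤ 11 / 6
  · exact sum_le_card_nsmul _ _ _ hall
  push Not at hall
  obtain ⟨b, hb, hw⟩ := hall
  obtain ⟨z, q, r, T, hz⟩ := (hf b).exists_singleTriple_of_lt_sum_weight H hw
  obtain ⟨x, hxb, hx⟩ := T.exists_light_bin H hf hz hw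
  refine sum_le_card_nsmul_of_add_le hb (mem_image_of_mem f (mem_univ x)) hxb.symm ?_ ?_
  · linarith [T.sum_weight_eq, T.weight_add_weight_le_one H]
  · intro c _ hcb _
    by_contra! hwc
    obtain ⟨y, _, _, T', hy⟩ := (hf c).exists_singleTriple_of_lt_sum_weight H hwc
    have hyz : y ≠ z := ne_of_mem_of_not_mem T'.single_mem (T.single_notMem_bin hcb)
    linarith [T'.single.one_lt_add T.single H hyz]

end Weight

section FirstFit

variable {k : ℕ}

lemma getD_ffUpdate (k : ℕ) (x : ℝ) (S : List (ℕ × ℝ)) (b : ℕ) :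
    (ffUpdate k x S).getD b 0 = S.getD b 0 + if ffFind k x S = b then (1, x) else 0 := by
  induction S generalizing b with
  | nil => cases b <;> simp [ffUpdate, ffFind]
  | cons c S ih =>
    by_cases h : c.1 < k ∧ c.2 + x ≤ 1
    · cases b <;> simp [ffUpdate, ffFind, h, Prod.add_def]
    · cases b with
      | zero => simp [ffUpdate, ffFind, h]
      | succ b => simpa [ffUpdate, ffFind, h] using ih b

lemma not_fits_of_lt_ffFind {x : ℝ} {S : List (ℕ × ℝ)} {b : ℕ} (hb : b < ffFind k x S) :
    ¬ ((S.getD b 0).1 < k ∧ (S.getD b 0).2 + x ≤ 1) := by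
  induction S generalizing b with
  | nil => simp [ffFind] at hb
  | cons c S ih =>
    by_cases h : c.1 < k ∧ c.2 + x ≤ 1
    · simp [ffFind, h] at hb
    · cases b with
      | zero => simpa using h
      | succ b =>
        simp only [ffFind, if_neg h, add_lt_add_iff_right] at hb
        simpa using ih hb

lemma ffUpdate_fst_pos {x : ℝ} {S : List (ℕ × ℝ)} (hS : ∀ c ∈ S, 0 < c.1) :
    ∀ c ∈ ffUpdate k x S, 0 < c.1 := by
  induction S with
  | nil => simp [ffUpdate]
  | cons d S ih =>
    rw [List.forall_mem_cons] at hS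
    unfold ffUpdate
    split_ifs
    · exact List.forall_mem_cons.2 ⟨Nat.succ_pos _, hS.2⟩
    · exact List.forall_mem_cons.2 ⟨hS.1, ih hS.2⟩

lemma ffState_fst_pos (k : ℕ) (L : List ℝ) : ∀ c ∈ ffState k L, 0 < c.1 :=
  List.foldlRecOn (motive := fun S : List (ℕ × ℝ) => ∀ c ∈ S, 0 < c.1) L _ (by simp)
    fun _ hS _ _ => ffUpdate_fst_pos hS

lemma ffState_take_succ (k : ℕ) (L : List ℝ) (i : Fin L.length) :
    ffState k (L.take (i + 1)) = ffUpdate k (L.get i) (ffState k (L.take i)) := by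
  rw [List.take_succ_eq_append_getElem i.isLt, ffState, List.foldl_append]
  rfl

lemma getD_ffState_take (k : ℕ) (L : List ℝ) (b : ℕ) {n : ℕ} (hn : n ≤ L.length) :
    (ffState k (L.take n)).getD b 0 =
      ∑ i ∈ bin (ffAssign k L) b with i.1 < n, (1, L.get i) := by
  induction n with
  | zero => simp [ffState]
  | succ n ih =>
    let i : Fin L.length := ⟨n, hn⟩
    have hfilter : {j ∈ bin (ffAssign k L) b | j.1 < n + 1} =
        {j ∈ bin (ffAssign k L) b | j.1 < n} ∪ {j ∈ bin (ffAssign k L) b | j = i} := by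
      rw [← filter_or]
      exact filter_congr fun j _ => by rw [Nat.lt_succ_iff_lt_or_eq, Fin.ext_iff]
    have hdisj : Disjoint {j ∈ bin (ffAssign k L) b | j.1 < n}
        {j ∈ bin (ffAssign k L) b | j = i} :=
      disjoint_filter.2 fun j _ hj h => hj.ne (congrArg Fin.val h)
    rw [ffState_take_succ k L i, getD_ffUpdate, ih (Nat.le_of_succ_le hn),
      hfilter, sum_union hdisj, filter_eq',
      apply_ite (fun B : Finset (Fin L.length) => ∑ j ∈ B, (1, L.get j)), sum_singleton,
      sum_empty]
    simp only [mem_bin, ffAssign, i]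

lemma getD_ffState (k : ℕ) (L : List ℝ) (b : ℕ) :
    (ffState k L).getD b 0 = ∑ i ∈ bin (ffAssign k L) b, (1, L.get i) := by
  simpa only [List.take_length, Fin.is_lt, filter_true] using getD_ffState_take k L b le_rfl

lemma image_ffAssign (k : ℕ) (L : List ℝ) : univ.image (ffAssign k L) = range (FF k L) := by
  ext b
  have hcard : ((ffState k L).getD b 0).1 = #(bin (ffAssign k L) b) := by
    rw [getD_ffState, Prod.fst_sum, card_eq_sum_ones]
  have hpos : 0 < ((ffState k L).getD b 0).1 ↔ b < FF k L := by
    refine ⟨fun h => ?_, fun h => ?_⟩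
    · by_contra! hb
      rw [List.getD_eq_default _ _ hb] at h
      exact lt_irrefl 0 h
    · rw [List.getD_eq_getElem _ _ h]
      exact ffState_fst_pos k L _ (List.getElem_mem h)
  rw [mem_range, ← hpos, hcard, card_pos]
  simp only [Finset.Nonempty, mem_bin, mem_image_univ_iff_mem_range, Set.mem_range]

lemma binsUsed_ffAssign (k : ℕ) (L : List ℝ) : binsUsed L (ffAssign k L) = FF k L := by
  rw [binsUsed, image_ffAssign, card_range]

lemma isFirstFit_ffAssign (k : ℕ) {L : List ℝ} (hL : ∀ x ∈ L, 0 ≤ x) :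
    IsFirstFit k L.get (ffAssign k L) where
  size_nonneg i := hL _ (L.get_mem i)
  one_lt_level_add t b hb hcard := by
    have hfits := not_fits_of_lt_ffFind (show b < ffFind k _ (ffState k (L.take t)) from hb)
    rw [getD_ffState_take k L b t.isLt.le, Prod.fst_sum, Prod.snd_sum,
      ← card_eq_sum_ones] at hfits
    have hsub := filter_subset (fun i => i.1 < t.1) (bin (ffAssign k L) b)
    have hsum := sum_le_sum_of_subset_of_nonneg hsub fun i _ _ => hL _ (L.get_mem i)
    by_contra! hle
    exact hfits ⟨(card_le_card hsub).trans_lt hcard, by linarith⟩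

end FirstFit

lemma isFeasible_val {k : ℕ} (hk : 1 ≤ k) {L : List ℝ} (hL : ∀ x ∈ L, x ≤ 1) :
    IsFeasible k L Fin.val := fun b => by
  have hcard : #(univ.filter fun i : Fin L.length => i.1 = b) ≤ 1 :=
    card_le_one.2 fun i hi j hj =>
      Fin.ext (((mem_filter_univ i).1 hi).trans ((mem_filter_univ j).1 hj).symm)
  refine ⟨hcard.trans hk, (sum_le_card_nsmul _ _ 1 fun i _ => hL _ (L.get_mem i)).trans ?_⟩
  rw [nsmul_one]
  exact_mod_cast hcard

lemma exists_isFeasible_binsUsed_eq_OPT {k : ℕ} (hk : 1 ≤ k) {L : List ℝ} (hL : ∀ x ∈ L, x ≤ 1) :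
    ∃ f, IsFeasible k L f ∧ binsUsed L f = OPT k L :=
  Nat.sInf_mem (s := {n | ∃ f, IsFeasible k L f ∧ binsUsed L f = n})
    ⟨_, Fin.val, isFeasible_val hk hL, rfl⟩

theorem ff_k3_ub_general {k : ℕ} (hk : 3 ≤ k) (L : List ℝ) (hL : ValidInput L) :
    (FF k L : ℝ) ≤ (11 / 6 : ℝ) * (OPT 3 L : ℝ) := by
  obtain ⟨f, hf, hOPT⟩ :=
    exists_isFeasible_binsUsed_eq_OPT (k := 3) (by norm_num) fun x hx => (hL x hx).2
  have hFF : IsFirstFit 3 L.get (ffAssign k L) :=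
    (isFirstFit_ffAssign k fun x hx => (hL x hx).1.le).mono hk
  calc (FF k L : ℝ) = #(univ.image (ffAssign k L)) := by rw [← binsUsed_ffAssign, binsUsed]
    _ ≤ ∑ i, weight L.get (ffAssign k L) i := card_image_le_sum_weight _ _
    _ ≤ #(univ.image f) * (11 / 6) := sum_weight_le hFF hf
    _ = 11 / 6 * (OPT 3 L : ℝ) := by rw [← hOPT, binsUsed, mul_comm]

/-- For k = 3 and every input `L`, FF(L) ≤ (11/6)·OPT(L): the absolute
competitive ratio of First Fit for k = 3 is at most 11/6. -/
theorem ff_k3_ub (L : List ℝ) (hL : ValidInput L) :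
    (FF 3 L : ℝ) ≤ (11 / 6 : ℝ) * (OPT 3 L : ℝ) :=
  ff_k3_ub_general le_rfl L hL
end
end
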